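/- arXiv:2604.01812 — 5 statements merged into one kernel-verified Lean document; each statement's English description precedes it below -/
import Mathlib

section
/- Let Ω ⊂ ℝ^d be a bounded open set, μ ∈ (0,1], n, N ∈ ℕ, U ⊆ ℝⁿ open, and let F : ℝ^d × ℝⁿ → ℝ^N be continuously differentiable on an open set containing cl(Ω) × U, and assume moreover that the partial derivative D₂F of F with respect to its second variable is itself continuously differentiable on an open set containing cl(Ω) × U. Then for every R > 0 and every compact set K ⊆ U there exists a constant C = C(R,K) > 0 with the following property: whenever u, v : ℝ^d → ℝⁿ satisfy ‖u(x)‖ ≤ R, ‖v(x)‖ ≤ R, ‖u(x) − u(y)‖ ≤ R‖x − y‖^μ and ‖v(x) − v(y)‖ ≤ R‖x − y‖^μ for all x, y ∈ cl(Ω), and u(x) + t(v(x) − u(x)) ∈ K for all x ∈ cl(Ω) and t ∈ [0,1], and whenever D > 0 is such that ‖u(x) − v(x)‖ ≤ D for all x ∈ cl(Ω) and ‖(u − v)(x) − (u − v)(y)‖ ≤ D‖x − y‖^μ for all x, y ∈ cl(Ω), then the map h(x) := F(x,u(x)) − F(x,v(x)) satisfies ‖h(x)‖ ≤ C·D for all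 x ∈ cl(Ω) and ‖h(x) − h(y)‖ ≤ C·D‖x − y‖^μ for all x, y ∈ cl(Ω). -/
open Set

/-- Lipschitz composition estimate in Hölder spaces, case m = 0 (Proposition
3.3 of the paper, second assertion): if `F` is `C¹` on a neighbourhood of
`cl(Ω) × U` and the partial derivative `D₂F` of `F` in its second variable is
itself `C¹` there, then for every `R > 0` and compact `K ⊆ U` there is
`C > 0` such that for all `u, v` bounded by `R` and `μ`-Hölder with constant
`R` on `cl(Ω)` whose segment `u + t(v-u)` stays in `K`, and any `D > 0`
bounding `u - v` in sup- and Hölder-seminorm, the difference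
`h(x) = F(x,u(x)) - F(x,v(x))` is bounded by `C·D` and `μ`-Hölder with
constant `C·D` on `cl(Ω)`. -/
theorem holder_composition_lipschitz
    {d n N : ℕ}
    (Ω : Set (EuclideanSpace ℝ (Fin d))) (hΩo : IsOpen Ω)
    (hΩb : Bornology.IsBounded Ω)
    (μ : ℝ) (hμ : μ ∈ Set.Ioc (0 : ℝ) 1)
    (U : Set (EuclideanSpace ℝ (Fin n))) (hU : IsOpen U)
    (F : EuclideanSpace ℝ (Fin d) × EuclideanSpace ℝ (Fin n) → EuclideanSpace ℝ (Fin N))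
    (V : Set (EuclideanSpace ℝ (Fin d) × EuclideanSpace ℝ (Fin n)))
    (hV : IsOpen V) (hVsub : (closure Ω) ×ˢ U ⊆ V)
    (hF : ContDiffOn ℝ 1 F V)
    (hD₂F : ContDiffOn ℝ 1
      (fun z : EuclideanSpace ℝ (Fin d) × EuclideanSpace ℝ (Fin n) =>
        fderiv ℝ (fun p => F (z.1, p)) z.2) V) :
    ∀ R > (0 : ℝ), ∀ K : Set (EuclideanSpace ℝ (Fin n)), IsCompact K → K ⊆ U →
      ∃ C > (0 : ℝ), ∀ u v : EuclideanSpace ℝ (Fin d) → EuclideanSpace ℝ (Fin n),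
        (∀ x ∈ closure Ω, ‖u x‖ ≤ R) → (∀ x ∈ closure Ω, ‖v x‖ ≤ R) →
        (∀ x ∈ closure Ω, ∀ y ∈ closure Ω, ‖u x - u y‖ ≤ R * ‖x - y‖ ^ μ) →
        (∀ x ∈ closure Ω, ∀ y ∈ closure Ω, ‖v x - v y‖ ≤ R * ‖x - y‖ ^ μ) →
        (∀ x ∈ closure Ω, ∀ t ∈ Icc (0 : ℝ) 1, u x + t • (v x - u x) ∈ K) →
        ∀ D > (0 : ℝ),
          (∀ x ∈ closure Ω, ‖u x - v x‖ ≤ D) →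
          (∀ x ∈ closure Ω, ∀ y ∈ closure Ω,
            ‖(u x - v x) - (u y - v y)‖ ≤ D * ‖x - y‖ ^ μ) →
          (∀ x ∈ closure Ω, ‖F (x, u x) - F (x, v x)‖ ≤ C * D) ∧
          (∀ x ∈ closure Ω, ∀ y ∈ closure Ω,
            ‖(F (x, u x) - F (x, v x)) - (F (y, u y) - F (y, v y))‖
              ≤ C * D * ‖x - y‖ ^ μ) := by
  intro R hR K hK hKU
  set G := (fun z : EuclideanSpace ℝ (Fin d) × EuclideanSpace ℝ (Fin n) =>
        fderiv ℝ (fun p => F (z.1, p)) z.2) with hG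
  have hcΩ : IsCompact (closure Ω) := hΩb.isCompact_closure
  have hS : IsCompact (closure Ω ×ˢ K) := hcΩ.prod hK
  have hSV : closure Ω ×ˢ K ⊆ V := (prod_mono le_rfl hKU).trans hVsub
  have hLL : LocallyLipschitzOn (closure Ω ×ˢ K) G := by
    intro z hz
    obtain ⟨L, t, ht, hL⟩ :=
      (hD₂F.contDiffAt (hV.mem_nhds (hSV hz))).exists_lipschitzOnWith
    exact ⟨L, t, mem_nhdsWithin_of_mem_nhds ht, hL⟩
  obtain ⟨L, hL⟩ := hLL.exists_lipschitzOnWith_of_compact hS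
  obtain ⟨M, hM⟩ := hS.exists_bound_of_continuousOn (hD₂F.continuousOn.mono hSV)
  obtain ⟨B, hB⟩ := Metric.isBounded_iff.1 hcΩ.isBounded
  have hL0 : (0 : ℝ) ≤ L := L.2
  set C : ℝ := |M| + L * (1 + |B| + R) + 1 with hC
  refine ⟨C, by positivity, ?_⟩
  intro u v _ _ hu hv hseg D hD huv huv'
  have hder : ∀ x ∈ closure Ω, ∀ t ∈ Icc (0 : ℝ) 1,
      HasDerivAt (fun t : ℝ => F (x, u x + t • (v x - u x)))
        (G (x, u x + t • (v x - u x)) (v x - u x)) t := by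
    intro x hx t ht
    have hzV : (x, u x + t • (v x - u x)) ∈ V := hSV ⟨hx, hseg x hx t ht⟩
    have h1 : DifferentiableAt ℝ F (x, u x + t • (v x - u x)) :=
      (hF.contDiffAt (hV.mem_nhds hzV)).differentiableAt one_ne_zero
    have h2 : DifferentiableAt ℝ (fun p => F (x, p)) (u x + t • (v x - u x)) :=
      h1.comp (u x + t • (v x - u x)) (by fun_prop :
        DifferentiableAt ℝ (fun p : EuclideanSpace ℝ (Fin n) => (x, p)) _)
    have h3 : HasDerivAt (fun t : ℝ => u x + t • (v x - u x)) (v x - u x) t := by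
      simpa using ((hasDerivAt_id t).smul_const (v x - u x)).const_add (u x)
    exact h2.hasFDerivAt.comp_hasDerivAt t h3
  have hGM : ∀ x ∈ closure Ω, ∀ t ∈ Icc (0 : ℝ) 1,
      ‖G (x, u x + t • (v x - u x))‖ ≤ |M| := fun x hx t ht =>
    (hM _ ⟨hx, hseg x hx t ht⟩).trans (le_abs_self M)
  have hvu : ∀ x ∈ closure Ω, ‖v x - u x‖ ≤ D := fun x hx => by
    rw [norm_sub_rev]; exact huv x hx
  constructor
  · intro x hx
    have key := norm_image_sub_le_of_norm_deriv_le_segment_01' (C := |M| * D)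
      (fun t ht => (hder x hx t ht).hasDerivWithinAt)
      (fun t ht => (ContinuousLinearMap.le_opNorm _ _).trans
        (mul_le_mul (hGM x hx t ⟨ht.1, ht.2.le⟩) (hvu x hx) (norm_nonneg _) (abs_nonneg _)))
    simp only [one_smul, zero_smul, add_zero, add_sub_cancel] at key
    rw [norm_sub_rev]
    refine key.trans (mul_le_mul_of_nonneg_right ?_ hD.le)
    have : 0 ≤ L * (1 + |B| + R) := by positivity
    linarith
  · intro x hx y hy
    set ρ := ‖x - y‖ ^ μ with hρ
    have hρ0 : 0 ≤ ρ := by positivity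
    have hxy : ‖x - y‖ ≤ (1 + |B|) * ρ := by
      rcases (norm_nonneg (x - y)).eq_or_lt with h | h
      · rw [← h]; positivity
      · have e : ‖x - y‖ = ‖x - y‖ ^ (1 - μ) * ρ := by
          rw [hρ, ← Real.rpow_add h]; simp
        have b1 : ‖x - y‖ ≤ 1 + |B| := by
          have := hB hx hy
          rw [dist_eq_norm] at this
          linarith [le_abs_self B]
        have b2 : ‖x - y‖ ^ (1 - μ) ≤ 1 + |B| := by
          calc ‖x - y‖ ^ (1 - μ) ≤ (1 + |B|) ^ (1 - μ) :=
                Real.rpow_le_rpow h.le b1 (by linarith [hμ.2])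
            _ ≤ (1 + |B|) ^ (1 : ℝ) :=
                Real.rpow_le_rpow_of_exponent_le (by linarith [abs_nonneg B]) (by linarith [hμ.1])
            _ = 1 + |B| := Real.rpow_one _
        calc ‖x - y‖ = ‖x - y‖ ^ (1 - μ) * ρ := e
          _ ≤ _ := mul_le_mul_of_nonneg_right b2 hρ0
    have hbound : ∀ t ∈ Ico (0 : ℝ) 1,
        ‖G (x, u x + t • (v x - u x)) (v x - u x) - G (y, u y + t • (v y - u y)) (v y - u y)‖
          ≤ C * D * ρ := by
      intro t ht'
      have ht : t ∈ Icc (0 : ℝ) 1 := ⟨ht'.1, ht'.2.le⟩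
      have hw : ‖(u x + t • (v x - u x)) - (u y + t • (v y - u y))‖ ≤ R * ρ := by
        have e : (u x + t • (v x - u x)) - (u y + t • (v y - u y))
            = (1 - t) • (u x - u y) + t • (v x - v y) := by module
        rw [e]
        refine (norm_add_le _ _).trans ?_
        rw [norm_smul, norm_smul, Real.norm_of_nonneg ht.1,
          Real.norm_of_nonneg (sub_nonneg.2 ht.2)]
        have h1 := mul_le_mul_of_nonneg_left (hu x hx y hy) (sub_nonneg.2 ht.2)
        have h2 := mul_le_mul_of_nonneg_left (hv x hx y hy) ht.1
        calc _ ≤ (1 - t) * (R * ρ) + t * (R * ρ) := add_le_add h1 h2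
          _ = R * ρ := by ring
      have hGL : ‖G (x, u x + t • (v x - u x)) - G (y, u y + t • (v y - u y))‖
          ≤ L * ((1 + |B| + R) * ρ) := by
        have h := hL.dist_le_mul (x, u x + t • (v x - u x)) ⟨hx, hseg x hx t ht⟩
          (y, u y + t • (v y - u y)) ⟨hy, hseg y hy t ht⟩
        rw [dist_eq_norm] at h
        refine h.trans (mul_le_mul_of_nonneg_left ?_ hL0)
        rw [Prod.dist_eq]
        refine max_le ?_ ?_
        · rw [dist_eq_norm]
          have : 0 ≤ R * ρ := by positivity
          linarith
        · rw [dist_eq_norm]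
          have : 0 ≤ (1 + |B|) * ρ := by positivity
          linarith
      have hdd : ‖(v x - u x) - (v y - u y)‖ ≤ D * ρ := by
        have e : (v x - u x) - (v y - u y) = -((u x - v x) - (u y - v y)) := by abel
        rw [e, norm_neg]; exact huv' x hx y hy
      have e : G (x, u x + t • (v x - u x)) (v x - u x)
            - G (y, u y + t • (v y - u y)) (v y - u y)
          = G (x, u x + t • (v x - u x)) ((v x - u x) - (v y - u y))
            + (G (x, u x + t • (v x - u x)) - G (y, u y + t • (v y - u y))) (v y - u y) := by
        rw [map_sub _ (v x - u x) (v y - u y), sub_apply]; abel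
      rw [e]
      have a1 := (ContinuousLinearMap.le_opNorm (G (x, u x + t • (v x - u x)))
        ((v x - u x) - (v y - u y))).trans
        (mul_le_mul (hGM x hx t ht) hdd (norm_nonneg _) (abs_nonneg _))
      have a2 := (ContinuousLinearMap.le_opNorm
        (G (x, u x + t • (v x - u x)) - G (y, u y + t • (v y - u y))) (v y - u y)).trans
        (mul_le_mul hGL (hvu y hy) (norm_nonneg _) (by positivity))
      refine (norm_add_le _ _).trans ((add_le_add a1 a2).trans ?_)
      have : 0 ≤ D * ρ := by positivity
      rw [hC]
      nlinarith
    have key := norm_image_sub_le_of_norm_deriv_le_segment_01'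
      (fun t ht => ((hder x hx t ht).sub (hder y hy t ht)).hasDerivWithinAt) hbound
    simp only [Pi.sub_apply, one_smul, zero_smul, add_zero, add_sub_cancel] at key
    have e : (F (x, u x) - F (x, v x)) - (F (y, u y) - F (y, v y))
        = -((F (x, v x) - F (y, v y)) - (F (x, u x) - F (y, u y))) := by abel
    rw [e, norm_neg]
    exact key
end

section
/- Let Ω ⊂ ℝ^d be an open set and let A_{ij}^{αβ} : Ω → ℝ (for α, β, i, j ∈ {1,…,d}) be bounded measurable functions. Assume that there exists ν > 0 such that for every smooth compactly supported vector field v ∈ C_c^∞(Ω, ℝ^d), ∫_Ω Σ_{α,β,i,j} A_{ij}^{αβ}(x) ∂_β v^i(x) ∂_α v^j(x) dx ≥ ν ∫_Ω |∇v(x)|² dx. Then for almost every x ∈ Ω (with respect to Lebesgue measure) the Legendre–Hadamard condition holds: for all p, q ∈ ℝ^d, Σ_{α,β,i,j} A_{ij}^{αβ}(x) q^i q^j p_α p_β ≥ ν |p|² |q|². -/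
open Set MeasureTheory

open Filter Topology Metric Function in
theorem aux_nonneg {d : ℕ} (Ω : Set (EuclideanSpace ℝ (Fin d))) (hΩo : IsOpen Ω)
    (f : EuclideanSpace ℝ (Fin d) → ℝ) (hf : Measurable f) (C : ℝ)
    (hC : ∀ x ∈ Ω, |f x| ≤ C)
    (h : ∀ g : EuclideanSpace ℝ (Fin d) → ℝ, ContDiff ℝ (⊤ : ℕ∞) g → HasCompactSupport g →
      tsupport g ⊆ Ω → 0 ≤ ∫ x in Ω, g x ^ 2 * f x) :
    ∀ᵐ x : EuclideanSpace ℝ (Fin d), x ∈ Ω → 0 ≤ f x := by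
  by_contra hcon
  have hSm : MeasurableSet {x | x ∈ Ω ∧ f x < 0} :=
    hΩo.measurableSet.inter (measurableSet_lt hf measurable_const)
  have hpos : 0 < volume {x | x ∈ Ω ∧ f x < 0} := by
    rw [pos_iff_ne_zero]
    intro h0
    apply hcon
    rw [ae_iff]
    convert h0 using 2
    ext x; simp
  obtain ⟨s, hsS, hs, hspos⟩ := hSm.exists_lt_isCompact hpos
  have hsΩ : s ⊆ Ω := fun x hx => (hsS hx).1
  obtain ⟨δ₁, δ₁pos, hδ₁⟩ := hs.exists_cthickening_subset_open hΩo hsΩ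
  obtain ⟨δ, δpos, hδ⟩ : ∃ δ, 0 < δ ∧ cthickening δ s ⊆ Ω := ⟨δ₁, δ₁pos, hδ₁⟩
  have K_compact : IsCompact (cthickening δ s) := hs.cthickening
  obtain ⟨u, -, u_pos, u_lim⟩ : ∃ u, StrictAnti u ∧ (∀ (n : ℕ), u n ∈ Ioo 0 δ)
    ∧ Tendsto u atTop (𝓝 0) := exists_seq_strictAnti_tendsto' δpos
  have vK : ∀ n, thickening (u n) s ⊆ cthickening δ s :=
    fun n ↦ thickening_subset_cthickening_of_le (u_pos n).2.le _
  have : ∀ n, ∃ (g : EuclideanSpace ℝ (Fin d) → ℝ), support g = thickening (u n) s ∧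
      ContDiff ℝ (⊤ : ℕ∞) g ∧ Set.range g ⊆ Set.Icc 0 1 ∧ ∀ x ∈ s, g x = 1 := by
    intro n
    rcases exists_contMDiff_support_eq_eq_one_iff (n := ⊤)
      (modelWithCornersSelf ℝ (EuclideanSpace ℝ (Fin d)))
      (isOpen_thickening (δ := u n) (E := s)) hs.isClosed
      (self_subset_thickening (u_pos n).1 s) with ⟨g, g_smooth, g_range, g_supp, hg⟩
    exact ⟨g, g_supp, g_smooth.contDiff, g_range, fun x hx ↦ (hg x).1 hx⟩
  choose g g_supp g_diff g_range hg using this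
  have htsupp : ∀ n, tsupport (g n) ⊆ cthickening δ s := fun n =>
    closure_minimal (by rw [g_supp]; exact vK n) isClosed_cthickening
  have L : Tendsto (fun n ↦ ∫ x in Ω, g n x ^ 2 * f x) atTop
      (𝓝 (∫ x in Ω, s.indicator f x)) := by
    refine tendsto_integral_of_dominated_convergence
      ((cthickening δ s).indicator (fun _ => C)) ?_ ?_ ?_ ?_
    · intro n
      exact (((g_diff n).continuous.pow 2).aestronglyMeasurable).mul hf.aestronglyMeasurable
    · rw [integrable_indicator_iff K_compact.measurableSet]
      refine integrableOn_const ?_ 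
      exact ((Measure.restrict_apply_le _ _).trans_lt K_compact.measure_lt_top).ne
    · intro n
      filter_upwards [ae_restrict_mem hΩo.measurableSet] with x hx
      have h1 := g_range n (mem_range_self (f := g n) x)
      refine le_indicator_apply (fun _ ↦ ?_) (fun hxK ↦ ?_)
      · rw [norm_mul, Real.norm_of_nonneg (sq_nonneg _)]
        have := hC x hx
        calc g n x ^ 2 * ‖f x‖ ≤ 1 * ‖f x‖ := by
              gcongr
              exact pow_le_one₀ h1.1 h1.2
          _ ≤ C := by simpa using this
      · have : g n x = 0 := by rw [← notMem_support, g_supp]; contrapose hxK; exact vK n hxK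
        simp [this]
    · filter_upwards with x
      by_cases hxs : x ∈ s
      · have : ∀ n, g n x = 1 := fun n ↦ hg n x hxs
        simp [this, indicator_of_mem hxs f]
      · simp_rw [indicator_of_notMem hxs f]
        apply tendsto_const_nhds.congr'
        suffices H : ∀ᶠ n in atTop, g n x = 0 by
          filter_upwards [H] with n hn using by simp [hn]
        obtain ⟨ε, εpos, hε⟩ : ∃ ε, 0 < ε ∧ x ∉ thickening ε s := by
          rw [← hs.isClosed.closure_eq, closure_eq_iInter_thickening s] at hxs
          simpa using hxs
        filter_upwards [(tendsto_order.1 u_lim).2 _ εpos] with n hn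
        rw [← notMem_support, g_supp]
        contrapose hε
        exact thickening_mono hn.le s hε
  have h0 : 0 ≤ ∫ x in Ω, s.indicator f x := by
    refine ge_of_tendsto' L (fun n => h _ (g_diff n) ?_ ((htsupp n).trans hδ))
    exact HasCompactSupport.of_support_subset_isCompact K_compact (by rw [g_supp]; exact vK n)
  rw [setIntegral_indicator hs.measurableSet, inter_eq_right.2 hsΩ] at h0
  have hint : IntegrableOn f s := by
    refine Measure.integrableOn_of_bounded (M := C) hs.measure_lt_top.ne hf.aestronglyMeasurable ?_
    filter_upwards [ae_restrict_mem hs.measurableSet] with x hx using hC x (hsΩ hx)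
  have h1 : 0 < ∫ x in s, - f x := by
    rw [setIntegral_pos_iff_support_of_nonneg_ae]
    · refine hspos.trans_le (measure_mono fun x hx => ⟨?_, hx⟩)
      have := (hsS hx).2
      simp [this.ne]
    · filter_upwards [ae_restrict_mem hs.measurableSet] with x hx
      have := (hsS hx).2
      simp [this.le]
    · exact hint.neg
  rw [integral_neg] at h1
  linarith

theorem aux_integrable {d : ℕ} (Ω : Set (EuclideanSpace ℝ (Fin d))) (hΩo : IsOpen Ω)
    (f g : EuclideanSpace ℝ (Fin d) → ℝ) (hf : Measurable f) (C : ℝ)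
    (hC : ∀ x ∈ Ω, |f x| ≤ C) (hg : Continuous g) (hgs : HasCompactSupport g) :
    Integrable (fun x => f x * g x) (volume.restrict Ω) := by
  refine Integrable.bdd_mul (c := C) (hg.integrable_of_hasCompactSupport hgs).integrableOn
    hf.aestronglyMeasurable ?_
  filter_upwards [ae_restrict_mem hΩo.measurableSet] with x hx using hC x hx

theorem aux_integrable2 {d : ℕ} (Ω : Set (EuclideanSpace ℝ (Fin d))) (hΩo : IsOpen Ω)
    (f : EuclideanSpace ℝ (Fin d) → ℝ) (hf : Measurable f) (C : ℝ)
    (hC : ∀ x ∈ Ω, |f x| ≤ C) (φ : EuclideanSpace ℝ (Fin d) → ℝ)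
    (hφ : ContDiff ℝ (⊤ : ℕ∞) φ) (hφs : HasCompactSupport φ) (e e' : EuclideanSpace ℝ (Fin d)) :
    Integrable (fun x => f x * (fderiv ℝ φ x e * fderiv ℝ φ x e')) (volume.restrict Ω) := by
  have hc : ∀ e, Continuous (fun x => fderiv ℝ φ x e) := fun e =>
    (hφ.continuous_fderiv (by simp)).clm_apply continuous_const
  refine aux_integrable Ω hΩo f _ hf C hC ((hc e).mul (hc e')) ?_
  exact (hφs.fderiv_apply ℝ e).mul_right

open Filter Topology in
theorem aux_scalar {d : ℕ} (Ω : Set (EuclideanSpace ℝ (Fin d))) (hΩo : IsOpen Ω)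
    (B : Fin d → Fin d → EuclideanSpace ℝ (Fin d) → ℝ) (hB : ∀ α β, Measurable (B α β))
    (C : ℝ) (hC : ∀ α β, ∀ x ∈ Ω, |B α β x| ≤ C)
    (h : ∀ φ : EuclideanSpace ℝ (Fin d) → ℝ, ContDiff ℝ (⊤ : ℕ∞) φ → HasCompactSupport φ →
      tsupport φ ⊆ Ω → 0 ≤ ∫ x in Ω, ∑ α, ∑ β, B α β x *
        (fderiv ℝ φ x (EuclideanSpace.single β 1) * fderiv ℝ φ x (EuclideanSpace.single α 1)))
    (p : Fin d → ℝ) :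
    ∀ᵐ x : EuclideanSpace ℝ (Fin d), x ∈ Ω → 0 ≤ ∑ α, ∑ β, B α β x * (p α * p β) := by
  have hfm : Measurable (fun x => ∑ α, ∑ β, B α β x * (p α * p β)) :=
    Finset.measurable_sum _ fun α _ => Finset.measurable_sum _ fun β _ => (hB α β).mul_const _
  have hfb : ∀ x ∈ Ω, |∑ α, ∑ β, B α β x * (p α * p β)| ≤ ∑ α, ∑ β, C * |p α * p β| := by
    intro x hx
    refine (Finset.abs_sum_le_sum_abs _ _).trans (Finset.sum_le_sum fun α _ => ?_)
    refine (Finset.abs_sum_le_sum_abs _ _).trans (Finset.sum_le_sum fun β _ => ?_)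
    rw [abs_mul]
    exact mul_le_mul_of_nonneg_right (hC α β x hx) (abs_nonneg _)
  refine aux_nonneg Ω hΩo _ hfm _ hfb ?_
  intro ψ hψ hψs hψΩ
  let L : EuclideanSpace ℝ (Fin d) →L[ℝ] ℝ := innerSL ℝ (WithLp.toLp 2 p)
  have hL : ∀ α, L (EuclideanSpace.single α 1) = p α := by
    intro α
    simp [L, EuclideanSpace.inner_single_right]
  let Q : (EuclideanSpace ℝ (Fin d) → ℝ) → EuclideanSpace ℝ (Fin d) → ℝ := fun φ x =>
    ∑ α, ∑ β, B α β x *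
        (fderiv ℝ φ x (EuclideanSpace.single β 1) * fderiv ℝ φ x (EuclideanSpace.single α 1))
  have hQi : ∀ φ, ContDiff ℝ (⊤ : ℕ∞) φ → HasCompactSupport φ →
      Integrable (Q φ) (volume.restrict Ω) := by
    intro φ h1 h2
    exact integrable_finsetSum _ fun α _ => integrable_finsetSum _ fun β _ =>
      aux_integrable2 Ω hΩo _ (hB α β) C (hC α β) φ h1 h2 _ _
  have hψi : Integrable (fun x => ψ x ^ 2 * ∑ α, ∑ β, B α β x * (p α * p β))
      (volume.restrict Ω) := by
    have := aux_integrable Ω hΩo _ (fun x => ψ x ^ 2) hfm _ hfb (hψ.continuous.pow 2)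
      (by simp only [pow_two]; exact hψs.mul_right (f' := ψ))
    simpa only [mul_comm] using this
  have key : ∀ n : ℕ, 0 ≤ (((n : ℝ) + 1)⁻¹) ^ 2 * (∫ x in Ω, Q ψ x) +
      ∫ x in Ω, ψ x ^ 2 * ∑ α, ∑ β, B α β x * (p α * p β) := by
    intro n
    set k : ℝ := (n : ℝ) + 1 with hk
    have hk0 : k ≠ 0 := by positivity
    let φ₁ : EuclideanSpace ℝ (Fin d) → ℝ := fun x => ψ x * (k⁻¹ * Real.cos (k * L x))
    let φ₂ : EuclideanSpace ℝ (Fin d) → ℝ := fun x => ψ x * (k⁻¹ * Real.sin (k * L x))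
    have s₁ : ContDiff ℝ (⊤ : ℕ∞) φ₁ := by
      have := L.contDiff (n := (⊤ : ℕ∞))
      exact hψ.mul (contDiff_const.mul (Real.contDiff_cos.comp (contDiff_const.mul this)))
    have s₂ : ContDiff ℝ (⊤ : ℕ∞) φ₂ := by
      have := L.contDiff (n := (⊤ : ℕ∞))
      exact hψ.mul (contDiff_const.mul (Real.contDiff_sin.comp (contDiff_const.mul this)))
    have c₁ : HasCompactSupport φ₁ := hψs.mul_right
    have c₂ : HasCompactSupport φ₂ := hψs.mul_right
    have t₁ : tsupport φ₁ ⊆ Ω := (tsupport_mul_subset_left).trans hψΩ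
    have t₂ : tsupport φ₂ ⊆ Ω := (tsupport_mul_subset_left).trans hψΩ
    have i₁ := h φ₁ s₁ c₁ t₁
    have i₂ := h φ₂ s₂ c₂ t₂
    have hd : ∀ x, HasFDerivAt ψ (fderiv ℝ ψ x) x := fun x =>
      (hψ.differentiable (by simp) x).hasFDerivAt
    have d₁ : ∀ x α, fderiv ℝ φ₁ x (EuclideanSpace.single α 1) =
        k⁻¹ * Real.cos (k * L x) * fderiv ℝ ψ x (EuclideanSpace.single α 1)
          - ψ x * Real.sin (k * L x) * p α := by
      intro x α
      have := (hd x).mul (((L.hasFDerivAt (x := x)).const_mul k).cos.const_mul k⁻¹)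
      rw [show fderiv ℝ φ₁ x = _ from HasFDerivAt.fderiv this]
      simp [hL]
      field_simp
      ring
    have d₂ : ∀ x α, fderiv ℝ φ₂ x (EuclideanSpace.single α 1) =
        k⁻¹ * Real.sin (k * L x) * fderiv ℝ ψ x (EuclideanSpace.single α 1)
          + ψ x * Real.cos (k * L x) * p α := by
      intro x α
      have := (hd x).mul (((L.hasFDerivAt (x := x)).const_mul k).sin.const_mul k⁻¹)
      rw [show fderiv ℝ φ₂ x = _ from HasFDerivAt.fderiv this]
      simp [hL]
      field_simp
      ring
    have hsum : ∀ x, Q φ₁ x + Q φ₂ x = k⁻¹ ^ 2 * Q ψ x +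
        ψ x ^ 2 * ∑ α, ∑ β, B α β x * (p α * p β) := by
      intro x
      simp only [Q, Finset.mul_sum, ← Finset.sum_add_distrib]
      refine Finset.sum_congr rfl fun α _ => Finset.sum_congr rfl fun β _ => ?_
      rw [d₁, d₁, d₂, d₂]
      have hcs := Real.sin_sq_add_cos_sq (k * L x)
      have hs2 : Real.sin (k * L x) ^ 2 = 1 - Real.cos (k * L x) ^ 2 := by linarith
      ring_nf
      rw [hs2]
      ring
    have : (∫ x in Ω, Q φ₁ x) + (∫ x in Ω, Q φ₂ x) = k⁻¹ ^ 2 * (∫ x in Ω, Q ψ x) +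
      ∫ x in Ω, ψ x ^ 2 * ∑ α, ∑ β, B α β x * (p α * p β) := by
      rw [← integral_add (hQi _ s₁ c₁) (hQi _ s₂ c₂), ← integral_const_mul,
        ← integral_add ((hQi _ hψ hψs).const_mul _) hψi]
      exact integral_congr_ae (Eventually.of_forall hsum)
    rw [← this]
    exact add_nonneg i₁ i₂
  have hlim : Tendsto (fun n : ℕ => (((n : ℝ) + 1)⁻¹) ^ 2 * (∫ x in Ω, Q ψ x) +
      ∫ x in Ω, ψ x ^ 2 * ∑ α, ∑ β, B α β x * (p α * p β)) atTop
      (𝓝 ((0:ℝ) ^ 2 * (∫ x in Ω, Q ψ x) +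
      ∫ x in Ω, ψ x ^ 2 * ∑ α, ∑ β, B α β x * (p α * p β))) := by
    have h0 : Tendsto (fun n : ℕ => ((n : ℝ) + 1)⁻¹) atTop (𝓝 0) := by
      simpa using tendsto_one_div_add_atTop_nhds_zero_nat (𝕜 := ℝ)
    exact ((h0.pow 2).mul_const _).add_const _
  simpa using ge_of_tendsto' hlim key


/-- Coercivity implies the Legendre–Hadamard condition almost everywhere
(Proposition 3.7 of the paper): if the bounded measurable coefficients
`A_{ij}^{αβ}` satisfy the coercivity estimate for all smooth compactly
supported test fields `v` with support in `Ω`, then for a.e. `x ∈ Ω` the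
Legendre–Hadamard condition holds with the same constant `ν`. -/
theorem coercivity_implies_legendre_hadamard
    {d : ℕ}
    (Ω : Set (EuclideanSpace ℝ (Fin d))) (hΩo : IsOpen Ω)
    (A : Fin d → Fin d → Fin d → Fin d → EuclideanSpace ℝ (Fin d) → ℝ)
    (hAmeas : ∀ i j α β, Measurable (A i j α β))
    (hAbdd : ∃ Cb : ℝ, ∀ i j α β, ∀ x ∈ Ω, |A i j α β x| ≤ Cb)
    (ν : ℝ) (hν : 0 < ν)
    (hcoer : ∀ v : EuclideanSpace ℝ (Fin d) → EuclideanSpace ℝ (Fin d),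
      ContDiff ℝ (⊤ : ℕ∞) v → HasCompactSupport v → tsupport v ⊆ Ω →
      ν * ∫ x in Ω, ∑ i, ∑ α, (fderiv ℝ v x (EuclideanSpace.single α 1) i) ^ 2
        ≤ ∫ x in Ω, ∑ α, ∑ β, ∑ i, ∑ j,
            A i j α β x * (fderiv ℝ v x (EuclideanSpace.single β 1) i) *
              (fderiv ℝ v x (EuclideanSpace.single α 1) j)) :
    ∀ᵐ x : EuclideanSpace ℝ (Fin d), x ∈ Ω →
      ∀ p q : Fin d → ℝ,
        ν * ((∑ α, (p α) ^ 2) * (∑ i, (q i) ^ 2)) ≤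
          ∑ α, ∑ β, ∑ i, ∑ j, A i j α β x * q i * q j * p α * p β := by
  obtain ⟨Cb, hCb⟩ := hAbdd
  have step : ∀ p q : Fin d → ℝ, ∀ᵐ x : EuclideanSpace ℝ (Fin d), x ∈ Ω →
        ν * ((∑ α, (p α) ^ 2) * (∑ i, (q i) ^ 2)) ≤
          ∑ α, ∑ β, ∑ i, ∑ j, A i j α β x * q i * q j * p α * p β := by
    intro p q
    let M : Fin d → Fin d → EuclideanSpace ℝ (Fin d) → ℝ := fun α β x =>
      ∑ i, ∑ j, A i j α β x * (q i * q j)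
    let N : Fin d → Fin d → ℝ := fun α β => if α = β then ν * ∑ i, (q i) ^ 2 else 0
    have hMm : ∀ α β, Measurable (M α β) := fun α β =>
      Finset.measurable_sum _ fun i _ => Finset.measurable_sum _ fun j _ =>
        (hAmeas i j α β).mul_const _
    have hMb : ∀ α β, ∀ x ∈ Ω, |M α β x| ≤ ∑ i, ∑ j, Cb * |q i * q j| := by
      intro α β x hx
      refine (Finset.abs_sum_le_sum_abs _ _).trans (Finset.sum_le_sum fun i _ => ?_)
      refine (Finset.abs_sum_le_sum_abs _ _).trans (Finset.sum_le_sum fun j _ => ?_)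
      rw [abs_mul]
      exact mul_le_mul_of_nonneg_right (hCb i j α β x hx) (abs_nonneg _)
    have hNb : ∀ α β, |N α β| ≤ ν * ∑ i, (q i) ^ 2 := by
      intro α β
      have : 0 ≤ ν * ∑ i, (q i) ^ 2 := by positivity
      by_cases hab : α = β
      · simp only [N, hab, if_true, abs_of_nonneg this, le_refl]
      · simpa only [N, hab, if_false, abs_zero] using this
    have hN : ∀ y : Fin d → ℝ, ∑ α, ∑ β, N α β * (y β * y α) =
        ν * ((∑ α, (y α) ^ 2) * (∑ i, (q i) ^ 2)) := by
      intro y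
      simp only [N, ite_mul, zero_mul, Finset.sum_ite_eq, Finset.mem_univ, if_true]
      rw [← Finset.mul_sum]
      simp only [pow_two]
      ring
    have hres := aux_scalar Ω hΩo (fun α β x => M α β x - N α β)
      (fun α β => (hMm α β).sub_const _)
      ((∑ i, ∑ j, Cb * |q i * q j|) + ν * ∑ i, (q i) ^ 2)
      (fun α β x hx => (abs_sub _ _).trans (add_le_add (hMb α β x hx) (hNb α β))) ?_ p
    · filter_upwards [hres] with x hx hxΩ
      have h1 := hx hxΩ
      simp only [sub_mul, Finset.sum_sub_distrib] at h1
      have h2 := hN p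
      have h3 : ∑ α, ∑ β, N α β * (p α * p β) = ∑ α, ∑ β, N α β * (p β * p α) := by
        simp only [mul_comm]
      have h4 : ∑ α, ∑ β, M α β x * (p α * p β) =
          ∑ α, ∑ β, ∑ i, ∑ j, A i j α β x * q i * q j * p α * p β := by
        simp only [M, Finset.sum_mul]
        refine Finset.sum_congr rfl fun α _ => Finset.sum_congr rfl fun β _ =>
          Finset.sum_congr rfl fun i _ => Finset.sum_congr rfl fun j _ => by ring
      linarith
    · intro φ hφ hφs hφΩ
      let qv : EuclideanSpace ℝ (Fin d) := WithLp.toLp 2 q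
      have hd : ∀ x e i, fderiv ℝ (fun x => φ x • qv) x e i = fderiv ℝ φ x e * q i := by
        intro x e i
        have := ((hφ.differentiable (by simp) x).hasFDerivAt).smul_const qv
        rw [HasFDerivAt.fderiv this]
        simp [qv]
      have hc := hcoer (fun x => φ x • qv) (hφ.smul contDiff_const) hφs.smul_right
        ((tsupport_smul_subset_left φ (fun _ => qv)).trans hφΩ)
      simp only [hd] at hc
      have iM : Integrable (fun x => ∑ α, ∑ β, M α β x *
          (fderiv ℝ φ x (EuclideanSpace.single β 1) * fderiv ℝ φ x (EuclideanSpace.single α 1)))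
          (volume.restrict Ω) :=
        integrable_finsetSum _ fun α _ => integrable_finsetSum _ fun β _ =>
          aux_integrable2 Ω hΩo _ (hMm α β) _ (hMb α β) φ hφ hφs _ _
      have iN : Integrable (fun x => ∑ α, ∑ β, N α β *
          (fderiv ℝ φ x (EuclideanSpace.single β 1) * fderiv ℝ φ x (EuclideanSpace.single α 1)))
          (volume.restrict Ω) :=
        integrable_finsetSum _ fun α _ => integrable_finsetSum _ fun β _ =>
          aux_integrable2 Ω hΩo (fun _ => N α β) measurable_const _ (fun _ _ => hNb α β)
            φ hφ hφs _ _
      simp only [sub_mul, Finset.sum_sub_distrib]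
      rw [integral_sub iM iN, sub_nonneg]
      convert hc using 1
      · rw [← integral_const_mul]
        congr 1
        ext x
        rw [hN (fun α => fderiv ℝ φ x (EuclideanSpace.single α 1))]
        congr 1
        rw [mul_comm, Finset.sum_mul_sum]
        refine Finset.sum_congr rfl fun α _ => Finset.sum_congr rfl fun β _ => by ring
      · congr 1
        ext x
        simp only [M, Finset.sum_mul]
        refine Finset.sum_congr rfl fun α _ => Finset.sum_congr rfl fun β _ =>
          Finset.sum_congr rfl fun i _ => Finset.sum_congr rfl fun j _ => by ring
  obtain ⟨S, hSc, hSd⟩ := TopologicalSpace.exists_countable_dense ((Fin d → ℝ) × (Fin d → ℝ))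
  have hall : ∀ᵐ x : EuclideanSpace ℝ (Fin d), ∀ z ∈ S, x ∈ Ω →
        ν * ((∑ α, (z.1 α) ^ 2) * (∑ i, (z.2 i) ^ 2)) ≤
          ∑ α, ∑ β, ∑ i, ∑ j, A i j α β x * z.2 i * z.2 j * z.1 α * z.1 β :=
    (ae_ball_iff hSc).2 fun z _ => step z.1 z.2
  filter_upwards [hall] with x hx hxΩ p q
  have hcl : IsClosed {z : (Fin d → ℝ) × (Fin d → ℝ) |
      ν * ((∑ α, (z.1 α) ^ 2) * (∑ i, (z.2 i) ^ 2)) ≤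
          ∑ α, ∑ β, ∑ i, ∑ j, A i j α β x * z.2 i * z.2 j * z.1 α * z.1 β} :=
    isClosed_le (by fun_prop) (by fun_prop)
  have hsub := hcl.closure_subset_iff.2 (fun z hz => hx z hz hxΩ)
  exact hsub (hSd (p, q))
end

section
/- Let d ≥ 2 and B ∈ ℝ^{d×d}. With SO(d) = {Q ∈ ℝ^{d×d} : QᵀQ = 1_d, det Q = 1} and dist_F(A, SO(d)) = inf{‖A − Q‖_F : Q ∈ SO(d)} the Frobenius distance to SO(d), one has lim_{ε → 0⁺} dist_F(1_d + εB, SO(d)) / ε = ‖(B + Bᵀ)/2‖_F. In particular dist_F(1_d + εB, SO(d)) = (ε/2)‖B + Bᵀ‖_F + O(ε²) as ε → 0⁺. -/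
open Filter Asymptotics Matrix
open scoped Matrix

/-- Frobenius norm of a real square matrix. -/
noncomputable def frobNorm {d : ℕ} (A : Matrix (Fin d) (Fin d) ℝ) : ℝ :=
  Real.sqrt (∑ i, ∑ j, (A i j) ^ 2)

/-- Frobenius distance of a matrix to the special orthogonal group SO(d). -/
noncomputable def distSO {d : ℕ} (A : Matrix (Fin d) (Fin d) ℝ) : ℝ :=
  sInf {r : ℝ | ∃ Q : Matrix (Fin d) (Fin d) ℝ,
    Qᵀ * Q = 1 ∧ Q.det = 1 ∧ r = frobNorm (A - Q)}

section helpers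

attribute [local instance] Matrix.frobeniusNormedRing Matrix.frobeniusNormedAlgebra

theorem frobNorm_eq_norm {d : ℕ} (A : Matrix (Fin d) (Fin d) ℝ) : frobNorm A = ‖A‖ := by
  unfold frobNorm
  rw [Matrix.frobenius_norm_def, Real.sqrt_eq_rpow]
  simp

theorem norm_transp {d : ℕ} (A : Matrix (Fin d) (Fin d) ℝ) : ‖Aᵀ‖ = ‖A‖ :=
  Matrix.frobenius_norm_transpose A

theorem cayley_ex {d : ℕ} (X : Matrix (Fin d) (Fin d) ℝ) (hX : Xᵀ = -X) (hs : ‖X‖ ≤ 1 / 2) :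
    ∃ Q : Matrix (Fin d) (Fin d) ℝ, Qᵀ * Q = 1 ∧ Q.det = 1 ∧
      ‖Q - 1 - (2 : ℝ) • X‖ ≤ 4 * ‖X‖ ^ 2 := by
  haveI : CompleteSpace (Matrix (Fin d) (Fin d) ℝ) := FiniteDimensional.complete ℝ _
  have hu : IsUnit (1 - X) := isUnit_one_sub_of_norm_lt_one (by linarith)
  have hud : IsUnit (1 - X).det := (Matrix.isUnit_iff_isUnit_det _).1 hu
  have ht : (1 - X)ᵀ = 1 + X := by simp [hX]
  have ht' : (1 + X)ᵀ = 1 - X := by rw [← ht, Matrix.transpose_transpose]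
  have hdet : (1 + X).det = (1 - X).det := by rw [← ht, Matrix.det_transpose]
  have hud' : IsUnit (1 + X).det := hdet ▸ hud
  have hc : (1 - X) * (1 + X) = (1 + X) * (1 - X) := by noncomm_ring
  have hQ : (1 - X) * ((1 - X)⁻¹ * (1 + X)) = 1 + X := by
    rw [← mul_assoc, Matrix.mul_nonsing_inv _ hud, one_mul]
  refine ⟨(1 - X)⁻¹ * (1 + X), ?_, ?_, ?_⟩
  · rw [Matrix.transpose_mul, Matrix.transpose_nonsing_inv, ht, ht']
    have h1 : (1 + X)⁻¹ * (1 - X)⁻¹ = (1 - X)⁻¹ * (1 + X)⁻¹ := by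
      rw [← Matrix.mul_inv_rev, hc, Matrix.mul_inv_rev]
    calc (1 - X) * (1 + X)⁻¹ * ((1 - X)⁻¹ * (1 + X))
        = (1 - X) * ((1 + X)⁻¹ * (1 - X)⁻¹) * (1 + X) := by simp only [mul_assoc]
      _ = ((1 - X) * (1 - X)⁻¹) * ((1 + X)⁻¹ * (1 + X)) := by rw [h1]; simp only [mul_assoc]
      _ = 1 := by rw [Matrix.mul_nonsing_inv _ hud, Matrix.nonsing_inv_mul _ hud', one_mul]
  · have := congrArg Matrix.det hQ
    rw [Matrix.det_mul, hdet] at this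
    exact mul_left_cancel₀ hud.ne_zero (by rw [this, mul_one])
  · generalize (1 - X)⁻¹ * (1 + X) = Q at hQ
    have hR : Q - 1 - (2 : ℝ) • X = X * (Q - 1 - (2 : ℝ) • X) + (2 : ℝ) • (X * X) := by
      have : Q = 1 + X + X * Q := by rw [← hQ]; noncomm_ring
      have h2 : X * (Q - 1 - (2 : ℝ) • X) + (2 : ℝ) • (X * X) = X * Q - X := by
        simp [mul_sub]
      rw [h2]
      nth_rewrite 1 [this]
      rw [two_smul]; abel
    set R := Q - 1 - (2 : ℝ) • X
    have h1 : ‖R‖ ≤ ‖X‖ * ‖R‖ + 2 * (‖X‖ * ‖X‖) := by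
      calc ‖R‖ = ‖X * R + (2 : ℝ) • (X * X)‖ := by rw [← hR]
        _ ≤ ‖X * R‖ + ‖(2 : ℝ) • (X * X)‖ := norm_add_le _ _
        _ ≤ _ := by
          rw [norm_smul, Real.norm_of_nonneg (by norm_num : (0:ℝ) ≤ 2)]
          gcongr <;> exact norm_mul_le _ _
    nlinarith [norm_nonneg R, norm_nonneg X]

theorem distSO_upper {d : ℕ} (A Q : Matrix (Fin d) (Fin d) ℝ) (h : Qᵀ * Q = 1)
    (h1 : Q.det = 1) : distSO A ≤ ‖A - Q‖ := by
  rw [← frobNorm_eq_norm]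
  refine csInf_le ⟨0, ?_⟩ ⟨Q, h, h1, rfl⟩
  rintro r ⟨Q, -, -, rfl⟩
  exact Real.sqrt_nonneg _

theorem distSO_lower {d : ℕ} (A : Matrix (Fin d) (Fin d) ℝ) (c : ℝ)
    (h : ∀ Q : Matrix (Fin d) (Fin d) ℝ, Qᵀ * Q = 1 → c ≤ ‖A - Q‖) : c ≤ distSO A := by
  refine le_csInf ⟨_, 1, by simp, by simp, rfl⟩ ?_
  rintro r ⟨Q, hQ, -, rfl⟩
  rw [frobNorm_eq_norm]
  exact h Q hQ

theorem lower_aux {d : ℕ} (B Q : Matrix (Fin d) (Fin d) ℝ) (hQ : Qᵀ * Q = 1) (ε : ℝ)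
    (hε : 0 < ε) : ε * (‖B + Bᵀ‖ / 2) - 2 * ‖B‖ ^ 2 * ε ^ 2 ≤ ‖(1 + ε • B) - Q‖ := by
  set E := (1 + ε • B) - Q with hE
  have hs : ‖B + Bᵀ‖ ≤ 2 * ‖B‖ := by
    have := norm_add_le B Bᵀ
    rw [norm_transp] at this; linarith
  by_cases hle : ε * (‖B + Bᵀ‖ / 2) ≤ ‖E‖
  · have : 0 ≤ 2 * ‖B‖ ^ 2 * ε ^ 2 := by positivity
    linarith
  push Not at hle
  have hEB : ‖E‖ ≤ ε * ‖B‖ := by nlinarith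
  have key : ε • (B + Bᵀ) = E + Eᵀ + ε • (Eᵀ * B + Bᵀ * E) - Eᵀ * E - (ε ^ 2) • (Bᵀ * B) := by
    have hq : Q = 1 + ε • B - E := by rw [hE]; abel
    rw [hq] at hQ
    simp only [Matrix.transpose_sub, Matrix.transpose_add, Matrix.transpose_one,
      Matrix.transpose_smul, sub_mul, mul_sub, add_mul, mul_add, one_mul, mul_one,
      smul_mul_assoc, mul_smul_comm, smul_smul] at hQ
    rw [← sub_eq_zero] at hQ ⊢
    rw [← hQ, pow_two]
    module
  have n1 : ‖ε • (B + Bᵀ)‖ = ε * ‖B + Bᵀ‖ := by rw [norm_smul, Real.norm_of_nonneg hε.le]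
  have n2 : ‖ε • (Eᵀ * B + Bᵀ * E)‖ ≤ ε * (2 * (‖E‖ * ‖B‖)) := by
    rw [norm_smul, Real.norm_of_nonneg hε.le]
    have h1 := norm_mul_le Eᵀ B
    have h2 := norm_mul_le Bᵀ E
    rw [norm_transp] at h1 h2
    have := norm_add_le (Eᵀ * B) (Bᵀ * E)
    gcongr
    linarith
  have n3 : ‖Eᵀ * E‖ ≤ ‖E‖ * ‖E‖ := by
    have h1 := norm_mul_le Eᵀ E
    rwa [norm_transp] at h1
  have n4 : ‖(ε ^ 2) • (Bᵀ * B)‖ ≤ ε ^ 2 * (‖B‖ * ‖B‖) := by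
    have h1 := norm_mul_le Bᵀ B
    rw [norm_transp] at h1
    rw [norm_smul, Real.norm_of_nonneg (by positivity)]
    gcongr
  have n5 : ‖E + Eᵀ‖ ≤ 2 * ‖E‖ := by
    have := norm_add_le E Eᵀ
    rw [norm_transp] at this; linarith
  have t1 := norm_sub_le (E + Eᵀ + ε • (Eᵀ * B + Bᵀ * E) - Eᵀ * E) ((ε ^ 2) • (Bᵀ * B))
  have t2 := norm_sub_le (E + Eᵀ + ε • (Eᵀ * B + Bᵀ * E)) (Eᵀ * E)
  have t3 := norm_add_le (E + Eᵀ) (ε • (Eᵀ * B + Bᵀ * E))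
  rw [← key, n1] at t1
  have m1 : ε * (‖E‖ * ‖B‖) ≤ ε * ((ε * ‖B‖) * ‖B‖) := by gcongr
  have m2 : ‖E‖ * ‖E‖ ≤ (ε * ‖B‖) * (ε * ‖B‖) := by gcongr
  nlinarith

theorem upper_aux {d : ℕ} (B : Matrix (Fin d) (Fin d) ℝ) (ε : ℝ)
    (hε : 0 < ε) (hs : ε * ‖B‖ ≤ 1) :
    distSO (1 + ε • B) ≤ ε * (‖B + Bᵀ‖ / 2) + 2 * ‖B‖ ^ 2 * ε ^ 2 := by
  set X := (ε / 4) • (B - Bᵀ) with hXdef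
  have hX : Xᵀ = -X := by
    simp only [hXdef, Matrix.transpose_smul, Matrix.transpose_sub, Matrix.transpose_transpose]
    module
  have hn : ‖X‖ ≤ ε * ‖B‖ / 2 := by
    rw [hXdef, norm_smul, Real.norm_of_nonneg (by positivity)]
    have := norm_sub_le B Bᵀ
    rw [norm_transp] at this
    nlinarith
  obtain ⟨Q, h1, h2, h3⟩ := cayley_ex X hX (by linarith)
  refine (distSO_upper _ Q h1 h2).trans ?_
  have e : 1 + ε • B - Q = (ε / 2) • (B + Bᵀ) - (Q - 1 - (2 : ℝ) • X) := by
    rw [hXdef]; module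
  rw [e]
  refine (norm_sub_le _ _).trans ?_
  rw [norm_smul, Real.norm_of_nonneg (by positivity)]
  have : ‖X‖ ^ 2 ≤ (ε * ‖B‖ / 2) ^ 2 := by gcongr
  nlinarith [sq_nonneg (ε * ‖B‖)]

theorem frobNorm_half {d : ℕ} (A : Matrix (Fin d) (Fin d) ℝ) :
    frobNorm ((1 / 2 : ℝ) • A) = frobNorm A / 2 := by
  rw [frobNorm_eq_norm, frobNorm_eq_norm, norm_smul, Real.norm_of_nonneg (by norm_num)]
  ring

theorem main_bound {d : ℕ} (B : Matrix (Fin d) (Fin d) ℝ) :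
    ∃ C : ℝ, ∀ᶠ ε : ℝ in nhdsWithin 0 (Set.Ioi 0), 0 < ε ∧
      |distSO (1 + ε • B) - ε / 2 * frobNorm (B + Bᵀ)| ≤ C * ε ^ 2 := by
  refine ⟨2 * ‖B‖ ^ 2, ?_⟩
  have hsm : ∀ᶠ ε : ℝ in nhdsWithin 0 (Set.Ioi 0), ε * ‖B‖ < 1 := by
    apply Filter.Eventually.filter_mono nhdsWithin_le_nhds
    have : Tendsto (fun ε : ℝ => ε * ‖B‖) (nhds 0) (nhds (0 * ‖B‖)) :=
      (continuous_id.mul continuous_const).tendsto 0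
    rw [zero_mul] at this
    exact this.eventually_lt_const one_pos
  filter_upwards [hsm, self_mem_nhdsWithin] with ε h1 h2
  have h2 : 0 < ε := h2
  refine ⟨h2, ?_⟩
  rw [frobNorm_eq_norm, abs_le]
  have u := upper_aux B ε h2 h1.le
  have l := distSO_lower (1 + ε • B) _ (fun Q hQ => lower_aux B Q hQ ε h2)
  constructor <;> linarith

end helpers

/-- Linearization of the distance to SO(d) around the identity (used in the
proof of Proposition 4.3 of the paper, cf. (3.20) in Friesecke–James–Müller):
`dist_F(1 + εB, SO(d))/ε → ‖(B + Bᵀ)/2‖_F` as `ε → 0⁺`, and in fact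
`dist_F(1 + εB, SO(d)) = (ε/2)‖B + Bᵀ‖_F + O(ε²)` as `ε → 0⁺`. -/
theorem distSO_linearization {d : ℕ} (hd : 2 ≤ d) (B : Matrix (Fin d) (Fin d) ℝ) :
    Tendsto (fun ε : ℝ => distSO (1 + ε • B) / ε) (nhdsWithin 0 (Set.Ioi 0))
      (nhds (frobNorm ((1 / 2 : ℝ) • (B + Bᵀ)))) ∧
    (fun ε : ℝ => distSO (1 + ε • B) - ε / 2 * frobNorm (B + Bᵀ))
      =O[nhdsWithin 0 (Set.Ioi 0)] (fun ε : ℝ => ε ^ 2) := by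
  obtain ⟨C, hC⟩ := main_bound B
  constructor
  · rw [tendsto_iff_norm_sub_tendsto_zero, frobNorm_half]
    have hz : Tendsto (fun ε : ℝ => C * ε) (nhdsWithin 0 (Set.Ioi 0)) (nhds 0) := by
      have : Tendsto (fun ε : ℝ => C * ε) (nhds 0) (nhds (C * 0)) :=
        (continuous_const.mul continuous_id).tendsto 0
      rw [mul_zero] at this
      exact this.mono_left nhdsWithin_le_nhds
    refine squeeze_zero' (Eventually.of_forall fun _ => norm_nonneg _) ?_ hz
    filter_upwards [hC] with ε h
    obtain ⟨h0, h⟩ := h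
    have e : distSO (1 + ε • B) / ε - frobNorm (B + Bᵀ) / 2
        = (distSO (1 + ε • B) - ε / 2 * frobNorm (B + Bᵀ)) / ε := by
      field_simp
    rw [e, Real.norm_eq_abs, abs_div, abs_of_pos h0, div_le_iff₀ h0]
    calc _ ≤ _ := h
      _ = _ := by ring
  · refine IsBigO.of_bound C ?_
    filter_upwards [hC] with ε h
    rw [Real.norm_eq_abs, Real.norm_of_nonneg (by positivity)]
    exact h.2
end

section
/- Let d ≥ 2, let R > 0 be such that the closed Frobenius ball of radius R around the identity 1_d is contained in GL⁺(d) = {A ∈ ℝ^{d×d} : det A > 0}, and let W be a real-valued function, three times continuously differentiable on an open neighbourhood of this ball, such that W(1_d) = 0 and W(F) ≥ c_W · dist_F(F, SO(d))² for all F in the ball, where c_W > 0 and dist_F(F, SO(d)) = inf{‖F − Q‖_F : Q ∈ SO(d)}. Then for every matrix B ∈ ℝ^{d×d}: ‖B + Bᵀ‖_F² ≤ (2/c_W) · D²W(1_d)[B, B], where D²W(1_d)[B,B] denotes the second Fréchet derivative of W at 1_d evaluated twice at B. -/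
open scoped Matrix

attribute [local instance] Matrix.frobeniusNormedAddCommGroup Matrix.frobeniusNormedSpace

open Filter Topology in
theorem aux_taylor2 {E : Type*} [NormedAddCommGroup E] [NormedSpace ℝ E] (W : E → ℝ) (x B : E)
    (hW : ContDiffAt ℝ 3 W x) (hmin : IsLocalMin W x) (h0 : W x = 0) :
    Tendsto (fun t : ℝ => W (x + t • B) / t ^ 2) (𝓝[>] 0)
      (𝓝 (iteratedFDeriv ℝ 2 W x ![B, B] / 2)) := by
  have hline : ∀ t : ℝ, HasDerivAt (fun t : ℝ => x + t • B) B t := fun t => by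
    simpa using ((hasDerivAt_id t).smul_const B).const_add x
  have hcont : Tendsto (fun t : ℝ => x + t • B) (𝓝 0) (𝓝 x) := by
    simpa using (hline 0).continuousAt.tendsto
  have hev : ∀ᶠ y in 𝓝 x, DifferentiableAt ℝ W y := by
    filter_upwards [hW.eventually (by simp)] with y hy
    exact hy.differentiableAt (by norm_num)
  have hev' : ∀ᶠ t in 𝓝 (0 : ℝ), HasDerivAt (fun t : ℝ => W (x + t • B))
      (fderiv ℝ W (x + t • B) B) t := by
    filter_upwards [hcont.eventually hev] with t ht
    exact ht.hasFDerivAt.comp_hasDerivAt t (hline t)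
  have hfd : DifferentiableAt ℝ (fderiv ℝ W) x :=
    (hW.fderiv_right (m := 2) (by norm_num)).differentiableAt (by norm_num)
  have hz : fderiv ℝ W x = 0 := hmin.fderiv_eq_zero
  have h2 : HasDerivAt (fun t : ℝ => fderiv ℝ W (x + t • B) B)
      (fderiv ℝ (fderiv ℝ W) x B B) 0 := by
    have h3 : HasFDerivAt (fderiv ℝ W) (fderiv ℝ (fderiv ℝ W) x) (x + (0 : ℝ) • B) := by
      simpa using hfd.hasFDerivAt
    have h4 := h3.comp_hasDerivAt (0 : ℝ) (hline 0)
    have h5 := h4.clm_apply (hasDerivAt_const (0 : ℝ) B)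
    simpa using h5
  rw [iteratedFDeriv_two_apply]
  simp only [Matrix.cons_val_zero, Matrix.cons_val_one]
  apply HasDerivAt.lhopital_zero_nhdsGT (f' := fun t => fderiv ℝ W (x + t • B) B)
    (g' := fun t => 2 * t)
  · exact hev'.filter_mono nhdsWithin_le_nhds
  · filter_upwards with t
    simpa using hasDerivAt_pow 2 t
  · filter_upwards [self_mem_nhdsWithin] with t ht
    have : (0 : ℝ) < t := ht
    positivity
  · have := hev'.self_of_nhds.continuousAt.tendsto
    simp only [zero_smul, add_zero, h0] at this
    exact this.mono_left nhdsWithin_le_nhds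
  · have : ContinuousAt (fun t : ℝ => t ^ 2) 0 := by fun_prop
    have := this.tendsto
    simp only [ne_eq, OfNat.ofNat_ne_zero, not_false_eq_true, zero_pow] at this
    exact this.mono_left nhdsWithin_le_nhds
  · have h := h2.tendsto_slope_zero_right
    simp only [zero_add, zero_smul, add_zero, hz] at h
    have := h.div_const 2
    refine this.congr fun t => ?_
    simp [div_eq_mul_inv]
    ring

theorem aux_frob_sq {d : ℕ} (A : Matrix (Fin d) (Fin d) ℝ) : ‖A‖ ^ 2 = (Aᵀ * A).trace := by
  rw [Matrix.frobenius_norm_def, ← Real.sqrt_eq_rpow, Real.sq_sqrt (by positivity)]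
  simp only [Matrix.trace, Matrix.diag, Matrix.mul_apply, Matrix.transpose_apply]
  rw [Finset.sum_comm]
  simp [pow_two]

theorem aux_frob_orth {d : ℕ} (Q A : Matrix (Fin d) (Fin d) ℝ) (hQ : Qᵀ * Q = 1) :
    ‖Qᵀ * A‖ = ‖A‖ := by
  have hQ' : Q * Qᵀ = 1 := mul_eq_one_comm.mp hQ
  have : ‖Qᵀ * A‖ ^ 2 = ‖A‖ ^ 2 := by
    rw [aux_frob_sq, aux_frob_sq, Matrix.transpose_mul, Matrix.transpose_transpose,
      Matrix.mul_assoc, ← Matrix.mul_assoc Q, hQ', Matrix.one_mul]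
  exact (sq_eq_sq₀ (norm_nonneg _) (norm_nonneg _)).mp this

theorem aux_dist {d : ℕ} (B Q : Matrix (Fin d) (Fin d) ℝ) (hQ : Qᵀ * Q = 1) (t : ℝ)
    (ht : 0 ≤ t) : t * (‖B + Bᵀ‖ / 2 - t * ‖B‖ ^ 2) ≤ ‖(1 + t • B) - Q‖ := by
  set E := (1 + t • B) - Q with hE
  have hS : ‖B + Bᵀ‖ ≤ 2 * ‖B‖ := by
    have := norm_add_le B Bᵀ
    rw [Matrix.frobenius_norm_transpose] at this
    linarith
  rcases le_total ‖E‖ (t * ‖B‖) with h | h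
  · have key : t • (B + Bᵀ) = Qᵀ * E + (Qᵀ * E)ᵀ + Eᵀ * E - (t ^ 2) • (Bᵀ * B) := by
      have hF : Q + E = 1 + t • B := by rw [hE]; abel
      have h1 : (Q + E)ᵀ * (Q + E) = 1 + (Qᵀ * E + (Qᵀ * E)ᵀ + Eᵀ * E) := by
        rw [Matrix.transpose_add, Matrix.transpose_mul, Matrix.transpose_transpose,
          Matrix.add_mul, Matrix.mul_add, Matrix.mul_add, hQ]
        abel
      have h2 : (1 + t • B)ᵀ * (1 + t • B) = 1 + (t • (B + Bᵀ) + (t ^ 2) • (Bᵀ * B)) := by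
        simp only [Matrix.transpose_add, Matrix.transpose_smul, Matrix.transpose_one,
          Matrix.add_mul, Matrix.mul_add, Matrix.one_mul, Matrix.mul_one, Matrix.smul_mul,
          Matrix.mul_smul, smul_smul, smul_add, pow_two]
        abel
      rw [hF, h2] at h1
      rw [← add_left_cancel h1]
      abel
    have n1 : ‖t • (B + Bᵀ)‖ = t * ‖B + Bᵀ‖ := by
      rw [norm_smul, Real.norm_of_nonneg ht]
    have n2 : ‖(t ^ 2) • (Bᵀ * B)‖ ≤ t ^ 2 * ‖B‖ ^ 2 := by
      rw [norm_smul, Real.norm_of_nonneg (by positivity)]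
      have := Matrix.frobenius_norm_mul Bᵀ B
      rw [Matrix.frobenius_norm_transpose] at this
      rw [pow_two ‖B‖]
      gcongr
    have n3 : ‖Eᵀ * E‖ ≤ ‖E‖ * ‖E‖ := by
      simpa only [Matrix.frobenius_norm_transpose] using Matrix.frobenius_norm_mul Eᵀ E
    have n4 : ‖(Qᵀ * E)ᵀ‖ = ‖E‖ := by
      rw [Matrix.frobenius_norm_transpose, aux_frob_orth _ _ hQ]
    have n5 : ‖Qᵀ * E‖ = ‖E‖ := aux_frob_orth _ _ hQ
    have a1 := norm_sub_le (Qᵀ * E + (Qᵀ * E)ᵀ + Eᵀ * E) ((t ^ 2) • (Bᵀ * B))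
    have a2 := norm_add_le (Qᵀ * E + (Qᵀ * E)ᵀ) (Eᵀ * E)
    have a3 := norm_add_le (Qᵀ * E) ((Qᵀ * E)ᵀ)
    rw [← key, n1] at a1
    have a4 : ‖E‖ * ‖E‖ ≤ (t * ‖B‖) * (t * ‖B‖) := by gcongr
    nlinarith
  · have : t * (‖B + Bᵀ‖ / 2) ≤ t * ‖B‖ := by gcongr; linarith
    nlinarith [mul_nonneg (mul_nonneg ht ht) (sq_nonneg ‖B‖)]

/-- Coercivity estimate for the linearized elastic energy (from the proof of
Proposition 4.3 of the paper): if `W` is `C³` near the closed Frobenius ball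
of radius `R` around the identity contained in GL⁺(d), vanishes at the
identity and satisfies `W(F) ≥ c_W dist_F(F, SO(d))²` on the ball, then
`‖B + Bᵀ‖_F² ≤ (2/c_W) D²W(1)[B,B]` for every matrix `B`. Here the norm on
matrices is the Frobenius norm. -/
theorem second_derivative_coercivity {d : ℕ} (hd : 2 ≤ d)
    (R : ℝ) (hR : 0 < R)
    (hball : Metric.closedBall (1 : Matrix (Fin d) (Fin d) ℝ) R ⊆
      {A : Matrix (Fin d) (Fin d) ℝ | 0 < A.det})
    (W : Matrix (Fin d) (Fin d) ℝ → ℝ)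
    (V : Set (Matrix (Fin d) (Fin d) ℝ)) (hV : IsOpen V)
    (hVsub : Metric.closedBall (1 : Matrix (Fin d) (Fin d) ℝ) R ⊆ V)
    (hW : ContDiffOn ℝ 3 W V)
    (cW : ℝ) (hcW : 0 < cW)
    (hW1 : W 1 = 0)
    (hcoer : ∀ F ∈ Metric.closedBall (1 : Matrix (Fin d) (Fin d) ℝ) R,
      cW * (Metric.infDist F
        {Q : Matrix (Fin d) (Fin d) ℝ | Qᵀ * Q = 1 ∧ Q.det = 1}) ^ 2 ≤ W F)
    (B : Matrix (Fin d) (Fin d) ℝ) :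
    ‖B + Bᵀ‖ ^ 2 ≤ (2 / cW) * iteratedFDeriv ℝ 2 W 1 ![B, B] := by
  have hnhds : Metric.closedBall (1 : Matrix (Fin d) (Fin d) ℝ) R ∈ nhds 1 :=
    Metric.closedBall_mem_nhds _ hR
  have hWat : ContDiffAt ℝ 3 W 1 :=
    hW.contDiffAt (Filter.mem_of_superset hnhds hVsub)
  have hmin : IsLocalMin W 1 := by
    filter_upwards [hnhds] with F hF
    rw [hW1]
    exact le_trans (by positivity) (hcoer F hF)
  have hT := aux_taylor2 W 1 B hWat hmin hW1
  have hline : Filter.Tendsto (fun t : ℝ => (1 : Matrix (Fin d) (Fin d) ℝ) + t • B)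
      (nhds 0) (nhds 1) := by
    have : Continuous (fun t : ℝ => (1 : Matrix (Fin d) (Fin d) ℝ) + t • B) := by fun_prop
    simpa using this.tendsto 0
  have hL : Filter.Tendsto (fun t : ℝ => cW * (max (‖B + Bᵀ‖ / 2 - t * ‖B‖ ^ 2) 0) ^ 2)
      (nhdsWithin 0 (Set.Ioi 0)) (nhds (cW * (‖B + Bᵀ‖ / 2) ^ 2)) := by
    have hc : Continuous (fun t : ℝ => cW * (max (‖B + Bᵀ‖ / 2 - t * ‖B‖ ^ 2) 0) ^ 2) := by
      fun_prop
    have := hc.tendsto 0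
    rw [zero_mul, sub_zero, max_eq_left (by positivity)] at this
    exact this.mono_left nhdsWithin_le_nhds
  have hle := le_of_tendsto_of_tendsto hL hT (by
    filter_upwards [self_mem_nhdsWithin,
      (hline.eventually hnhds).filter_mono nhdsWithin_le_nhds] with t ht hF
    have ht0 : (0 : ℝ) < t := ht
    rw [le_div_iff₀ (by positivity)]
    refine le_trans ?_ (hcoer _ hF)
    have hne : {Q : Matrix (Fin d) (Fin d) ℝ | Qᵀ * Q = 1 ∧ Q.det = 1}.Nonempty :=
      ⟨1, by simp⟩
    have hd1 : t * (‖B + Bᵀ‖ / 2 - t * ‖B‖ ^ 2) ≤ Metric.infDist (1 + t • B)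
        {Q : Matrix (Fin d) (Fin d) ℝ | Qᵀ * Q = 1 ∧ Q.det = 1} := by
      rw [Metric.le_infDist hne]
      intro Q hQ
      rw [dist_eq_norm]
      exact aux_dist B Q hQ.1 t ht0.le
    have hd2 : t * max (‖B + Bᵀ‖ / 2 - t * ‖B‖ ^ 2) 0 ≤ Metric.infDist (1 + t • B)
        {Q : Matrix (Fin d) (Fin d) ℝ | Qᵀ * Q = 1 ∧ Q.det = 1} := by
      rw [mul_max_of_nonneg _ _ ht0.le, mul_zero]
      exact max_le hd1 Metric.infDist_nonneg
    rw [mul_assoc, ← mul_pow, mul_comm _ t]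
    gcongr)
  rw [div_mul_eq_mul_div, le_div_iff₀ hcW]
  nlinarith
end

section
/- Let Ω ⊂ ℝ^d be a bounded open connected set, λ ∈ (0,1) and K > 1. Define F_K as the set of matrix fields F : cl(Ω) → ℝ^{d×d} such that ‖F(x)‖ ≤ K for all x ∈ cl(Ω), ‖F(x) − F(y)‖ ≤ K‖x − y‖^λ for all x, y ∈ cl(Ω), and det(F(x)) ≥ 1/K for all x ∈ cl(Ω). Then there exists a constant C(K) > 0 such that for every F ∈ F_K and every smooth compactly supported vector field v ∈ C_c^∞(Ω, ℝ^d): ∫_Ω |F(x)ᵀ∇v(x) + (∇v(x))ᵀF(x)|² dx ≥ C(K) · (∫_Ω |v(x)|² dx + ∫_Ω |∇v(x)|² dx). -/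
open Set MeasureTheory Matrix
open scoped Matrix

/-- The Jacobian matrix of a map `v : ℝ^d → ℝ^d` at a point `x`, with entries
`(∇v(x))_{ij} = ∂_j v^i(x)`. -/
noncomputable def jacobianMatrix {d : ℕ}
    (v : EuclideanSpace ℝ (Fin d) → EuclideanSpace ℝ (Fin d))
    (x : EuclideanSpace ℝ (Fin d)) : Matrix (Fin d) (Fin d) ℝ :=
  Matrix.of fun i j => fderiv ℝ v x (EuclideanSpace.single j 1) i

/-- Euclidean space abbreviation. -/
abbrev ES (d : ℕ) := EuclideanSpace ℝ (Fin d)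

/-- Partial derivative. -/
noncomputable def pd {d : ℕ} (j : Fin d) (f : ES d → ℝ) (x : ES d) : ℝ :=
  fderiv ℝ f x (EuclideanSpace.single j 1)

/-- Test functions. -/
def TF {d : ℕ} (f : ES d → ℝ) : Prop := ContDiff ℝ (⊤ : ℕ∞) f ∧ HasCompactSupport f

theorem TF.diff {d : ℕ} {f : ES d → ℝ} (hf : TF f) : Differentiable ℝ f :=
  hf.1.differentiable (by simp)

theorem TF.cont {d : ℕ} {f : ES d → ℝ} (hf : TF f) : Continuous f := hf.1.continuous

theorem TF.int {d : ℕ} {f : ES d → ℝ} (hf : TF f) : Integrable f :=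
  hf.cont.integrable_of_hasCompactSupport hf.2

theorem TF.pd {d : ℕ} {f : ES d → ℝ} (hf : TF f) (j : Fin d) : TF (pd j f) := by
  refine ⟨?_, ?_⟩
  · have h : ContDiff ℝ (⊤ : ℕ∞) (fderiv ℝ f) := hf.1.fderiv_right (by simp)
    exact h.clm_apply contDiff_const
  · exact hf.2.fderiv_apply ℝ _

theorem TF.mul_left {d : ℕ} {f g : ES d → ℝ} (hf : TF f) (hg : ContDiff ℝ (⊤ : ℕ∞) g) :
    TF (fun x => g x * f x) := ⟨hg.mul hf.1, hf.2.mul_left⟩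

theorem TF.mul {d : ℕ} {f g : ES d → ℝ} (hf : TF f) (hg : TF g) :
    TF (fun x => f x * g x) := hg.mul_left hf.1

theorem TF.add {d : ℕ} {f g : ES d → ℝ} (hf : TF f) (hg : TF g) :
    TF (fun x => f x + g x) := ⟨hf.1.add hg.1, hf.2.add hg.2⟩

theorem TF.cmul {d : ℕ} {f : ES d → ℝ} (hf : TF f) (c : ℝ) :
    TF (fun x => c * f x) := hf.mul_left contDiff_const

theorem TF.sq {d : ℕ} {f : ES d → ℝ} (hf : TF f) :
    TF (fun x => f x ^ 2) := by simpa only [pow_two] using hf.mul hf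

theorem TF.zero {d : ℕ} : TF (fun _ : ES d => (0:ℝ)) :=
  ⟨contDiff_const, HasCompactSupport.zero⟩

theorem TF.sum {d : ℕ} {ι : Type*} (s : Finset ι) {f : ι → ES d → ℝ} (hf : ∀ i, TF (f i)) :
    TF (fun x => ∑ i ∈ s, f i x) := by
  classical
  induction s using Finset.induction_on with
  | empty => simpa using TF.zero
  | insert a s ha ih => simpa [Finset.sum_insert ha] using (hf a).add ih

theorem pd_mul {d : ℕ} {f g : ES d → ℝ} (hf : Differentiable ℝ f) (hg : Differentiable ℝ g)
    (j : Fin d) (x : ES d) :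
    pd j (fun x => f x * g x) x = f x * pd j g x + g x * pd j f x := by
  have := fderiv_fun_mul (hf x) (hg x)
  simp [pd, this]

theorem pd_sum {d : ℕ} {ι : Type*} (s : Finset ι) {f : ι → ES d → ℝ}
    (hf : ∀ i, Differentiable ℝ (f i)) (j : Fin d) (x : ES d) :
    pd j (fun x => ∑ i ∈ s, f i x) x = ∑ i ∈ s, pd j (f i) x := by
  have := fderiv_fun_sum (u := s) (A := f) (x := x) (𝕜 := ℝ) (fun i _ => hf i x)
  simp [pd, this]

theorem pd_cmul {d : ℕ} {f : ES d → ℝ} (hf : Differentiable ℝ f) (c : ℝ)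
    (j : Fin d) (x : ES d) :
    pd j (fun x => c * f x) x = c * pd j f x := by
  have := fderiv_const_mul (hf x) c
  simp [pd, this]

theorem ibp {d : ℕ} {f g : ES d → ℝ} (hf : TF f) (hg : TF g) (j : Fin d) :
    ∫ x, f x * pd j g x = - ∫ x, pd j f x * g x :=
  integral_mul_fderiv_eq_neg_fderiv_mul_of_integrable ((hf.pd j).mul hg).int
    (hf.mul (hg.pd j)).int (hf.mul hg).int (fun x _ => hf.diff x) (fun x _ => hg.diff x)

theorem pd_comm {d : ℕ} {f : ES d → ℝ} (hf : TF f) (i j : Fin d) (x : ES d) :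
    pd i (pd j f) x = pd j (pd i f) x := by
  have hs : IsSymmSndFDerivAt ℝ f x := by
    apply (hf.1.of_le (m := 2) (WithTop.coe_le_coe.2 (le_top (a := (2:ℕ∞))))).contDiffAt.isSymmSndFDerivAt
    simp
  have h : ContDiff ℝ (⊤ : ℕ∞) (fderiv ℝ f) := hf.1.fderiv_right (by simp)
  have hd : DifferentiableAt ℝ (fderiv ℝ f) x := h.differentiable (by simp) x
  have key : ∀ a b : Fin d, pd a (pd b f) x
      = fderiv ℝ (fderiv ℝ f) x (EuclideanSpace.single a 1) (EuclideanSpace.single b 1) := by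
    intro a b
    have h2 := fderiv_clm_apply hd (differentiableAt_const (EuclideanSpace.single b (1:ℝ)))
    have h3 : pd a (pd b f) x
      = fderiv ℝ (fun y => fderiv ℝ f y (EuclideanSpace.single b 1)) x
        (EuclideanSpace.single a 1) := rfl
    rw [h3, h2]
    simp
  rw [key, key]
  exact hs _ _

theorem ibp2 {d : ℕ} {f g : ES d → ℝ} (hf : TF f) (hg : TF g) (i j : Fin d) :
    ∫ x, pd j f x * pd i g x = ∫ x, pd i f x * pd j g x := by
  rw [ibp (hf.pd j) hg i, ibp (hf.pd i) hg j]
  simp_rw [pd_comm hf i j]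

theorem twist {d : ℕ} {f g : ES d → ℝ} (hf : TF f) (hg : TF g) (i j : Fin d) (a b : ℝ) :
    ∫ x, (pd j f x - b * f x) * (pd i g x - a * g x)
      = ∫ x, (pd i f x + a * f x) * (pd j g x + b * g x) := by
  have e1 : ∀ x, (pd j f x - b * f x) * (pd i g x - a * g x)
    = pd j f x * pd i g x + ((-a) * (pd j f x * g x) + ((-b) * (f x * pd i g x)
      + (a * b) * (f x * g x))) := fun x => by ring
  have e2 : ∀ x, (pd i f x + a * f x) * (pd j g x + b * g x)
    = pd i f x * pd j g x + (b * (pd i f x * g x) + (a * (f x * pd j g x)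
      + (a * b) * (f x * g x))) := fun x => by ring
  simp_rw [e1, e2]
  have t1 := fun i j => (hf.pd j).mul (hg.pd i)
  have t2 := fun j => (hf.pd j).mul hg
  have t3 := fun j => hf.mul (hg.pd j)
  have t4 := hf.mul hg
  rw [integral_add (t1 i j).int
      (((t2 j).cmul _).add (((t3 i).cmul _).add (t4.cmul _))).int,
    integral_add ((t2 j).cmul _).int (((t3 i).cmul _).add (t4.cmul _)).int,
    integral_add ((t3 i).cmul _).int (t4.cmul _).int,
    integral_add (t1 j i).int
      (((t2 i).cmul _).add (((t3 j).cmul _).add (t4.cmul _))).int,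
    integral_add ((t2 i).cmul _).int (((t3 j).cmul _).add (t4.cmul _)).int,
    integral_add ((t3 j).cmul _).int (t4.cmul _).int]
  simp only [integral_const_mul]
  rw [ibp2 hf hg i j, ibp hf hg i, ibp hf hg j]
  ring

/-- The weight. -/
noncomputable def wt {d : ℕ} (i0 : Fin d) (τ : ℝ) (x : ES d) : ℝ := Real.exp (τ * x i0)

theorem wt_contDiff {d : ℕ} (i0 : Fin d) (τ : ℝ) : ContDiff ℝ (⊤ : ℕ∞) (wt i0 τ) := by
  have : ContDiff ℝ (⊤ : ℕ∞) (fun x : ES d => x i0) :=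
    (EuclideanSpace.proj (𝕜 := ℝ) i0).contDiff
  unfold wt
  exact (contDiff_const.mul this).exp

theorem pd_wt {d : ℕ} (i0 : Fin d) (τ : ℝ) (j : Fin d) (x : ES d) :
    pd j (wt i0 τ) x = (if j = i0 then τ else 0) * wt i0 τ x := by
  have h1 : HasFDerivAt (fun x : ES d => x i0)
    (EuclideanSpace.proj (𝕜 := ℝ) i0) x :=
    (EuclideanSpace.proj (𝕜 := ℝ) i0).hasFDerivAt
  have h2 := (h1.const_mul τ).exp
  unfold pd
  have h3 : fderiv ℝ (wt i0 τ) x = _ := h2.fderiv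
  rw [h3]
  by_cases h : j = i0
  · subst h; simp [wt]; ring
  · simp [wt, h, Ne.symm h]

/-- Twisted derivative. -/
theorem wt_pd {d : ℕ} (i0 : Fin d) (τ : ℝ) {f : ES d → ℝ} (hf : TF f) (j : Fin d) (x : ES d) :
    wt i0 τ x * pd j f x = pd j (fun x => wt i0 τ x * f x) x
      - (if j = i0 then τ else 0) * (wt i0 τ x * f x) := by
  rw [pd_mul ((wt_contDiff i0 τ).differentiable (by simp)) hf.diff, pd_wt]
  ring

theorem carleman {d : ℕ} (i0 : Fin d) (τ : ℝ) {u : Fin d → ES d → ℝ} (hu : ∀ i, TF (u i)) :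
    2 * ∫ x, wt i0 τ x ^ 2 * ∑ i, ∑ j, pd j (u i) x ^ 2
      ≤ ∫ x, wt i0 τ x ^ 2 * ∑ i, ∑ j, (pd j (u i) x + pd i (u j) x) ^ 2 := by
  set c : Fin d → ℝ := fun j => if j = i0 then τ else 0 with hc
  set w : Fin d → ES d → ℝ := fun i x => wt i0 τ x * u i x with hw
  have hwT : ∀ i, TF (w i) := fun i => (hu i).mul_left (wt_contDiff i0 τ)
  have hW2 : ContDiff ℝ (⊤ : ℕ∞) (fun x => wt i0 τ x ^ 2) := (wt_contDiff (d := d) i0 τ).pow 2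
  have hkey : 0 ≤ ∫ x, wt i0 τ x ^ 2 * ∑ i, ∑ j, pd j (u i) x * pd i (u j) x := by
    have e1 : ∀ x, wt i0 τ x ^ 2 * ∑ i, ∑ j, pd j (u i) x * pd i (u j) x
        = ∑ i, ∑ j, (pd j (w i) x - c j * w i x) * (pd i (w j) x - c i * w j x) := by
      intro x
      simp only [Finset.mul_sum]
      refine Finset.sum_congr rfl fun i _ => Finset.sum_congr rfl fun j _ => ?_
      rw [← wt_pd i0 τ (hu i) j x, ← wt_pd i0 τ (hu j) i x]
      ring
    have e2 : ∀ x, (∑ i, (pd i (w i) x + c i * w i x)) ^ 2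
        = ∑ i, ∑ j, (pd i (w i) x + c i * w i x) * (pd j (w j) x + c j * w j x) := by
      intro x
      rw [pow_two, Finset.sum_mul_sum]
    have T1 : ∀ i j, TF (fun x => pd j (w i) x - c j * w i x) := fun i j => by
      simpa [sub_eq_add_neg] using ((hwT i).pd j).add ((hwT i).cmul (-c j))
    have T2 : ∀ i, TF (fun x => pd i (w i) x + c i * w i x) := fun i =>
      ((hwT i).pd i).add ((hwT i).cmul (c i))
    have e3 : ∫ x, wt i0 τ x ^ 2 * ∑ i, ∑ j, pd j (u i) x * pd i (u j) x
        = ∫ x, (∑ i, (pd i (w i) x + c i * w i x)) ^ 2 := by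
      simp_rw [e1, e2]
      rw [integral_finsetSum _ (fun i _ => (TF.sum _ fun j => (T1 i j).mul (T1 j i)).int),
        integral_finsetSum _ (fun i _ => (TF.sum _ fun j => (T2 i).mul (T2 j)).int)]
      refine Finset.sum_congr rfl fun i _ => ?_
      rw [integral_finsetSum _ (fun j _ => ((T1 i j).mul (T1 j i)).int),
        integral_finsetSum _ (fun j _ => ((T2 i).mul (T2 j)).int)]
      refine Finset.sum_congr rfl fun j _ => ?_
      exact twist (hwT i) (hwT j) i j (c i) (c j)
    rw [e3]
    exact integral_nonneg fun x => sq_nonneg _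
  have e4 : ∀ x, wt i0 τ x ^ 2 * ∑ i, ∑ j, (pd j (u i) x + pd i (u j) x) ^ 2
      = 2 * (wt i0 τ x ^ 2 * ∑ i, ∑ j, pd j (u i) x ^ 2)
        + 2 * (wt i0 τ x ^ 2 * ∑ i, ∑ j, pd j (u i) x * pd i (u j) x) := by
    intro x
    have h1 : ∑ i, ∑ j, (pd j (u i) x + pd i (u j) x) ^ 2
      = ∑ i, ∑ j, pd j (u i) x ^ 2 + (2 * ∑ i, ∑ j, pd j (u i) x * pd i (u j) x
        + ∑ i, ∑ j, pd i (u j) x ^ 2) := by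
      simp only [Finset.mul_sum, ← Finset.sum_add_distrib]
      refine Finset.sum_congr rfl fun i _ => Finset.sum_congr rfl fun j _ => ?_
      ring
    have h2 : ∑ i, ∑ j, pd i (u j) x ^ 2 = ∑ i, ∑ j, pd j (u i) x ^ 2 := Finset.sum_comm
    rw [h1, h2]; ring
  simp_rw [e4]
  rw [integral_add, integral_const_mul, integral_const_mul]
  · linarith
  · exact (((TF.sum _ fun i => TF.sum _ fun j => ((hu i).pd j).sq).mul_left hW2).cmul 2).int
  · exact (((TF.sum _ fun i => TF.sum _ fun j =>
      ((hu i).pd j).mul ((hu j).pd i)).mul_left hW2).cmul 2).int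

theorem wpoincare {d : ℕ} (i0 : Fin d) (τ : ℝ) {f : ES d → ℝ} (hf : TF f) :
    τ ^ 2 * ∫ x, wt i0 τ x ^ 2 * f x ^ 2 ≤ ∫ x, wt i0 τ x ^ 2 * pd i0 f x ^ 2 := by
  set w : ES d → ℝ := fun x => wt i0 τ x * f x with hw
  have hwT : TF w := hf.mul_left (wt_contDiff i0 τ)
  have e1 : ∀ x, wt i0 τ x ^ 2 * pd i0 f x ^ 2
      = pd i0 w x ^ 2 + ((-2 * τ) * (w x * pd i0 w x) + τ ^ 2 * (wt i0 τ x ^ 2 * f x ^ 2)) := by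
    intro x
    have := wt_pd i0 τ hf i0 x
    rw [← mul_pow, this, if_pos rfl]
    simp only [hw]
    ring
  have e0 : ∫ x, w x * pd i0 w x = 0 := by
    have := ibp hwT hwT i0
    simp_rw [mul_comm (pd i0 w _) (w _)] at this
    linarith
  have hW2 : ContDiff ℝ (⊤ : ℕ∞) (fun x => wt i0 τ x ^ 2) := (wt_contDiff (d := d) i0 τ).pow 2
  have t1 := (hwT.pd i0).sq
  have t2 := (hwT.mul (hwT.pd i0)).cmul (-2 * τ)
  have t3 := (hf.sq.mul_left hW2).cmul (τ^2)
  simp_rw [e1]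
  rw [integral_add t1.int (t2.add t3).int, integral_add t2.int t3.int, integral_const_mul,
    integral_const_mul, e0]
  have : 0 ≤ ∫ x, pd i0 w x ^ 2 := integral_nonneg fun x => sq_nonneg _
  linarith

theorem conv_int {d : ℕ} {g h : ES d → ℝ} (hg : Integrable g) (hh : Integrable h) :
    Integrable (fun y => ∫ x, g x * h (y - x)) ∧
    ∫ y, ∫ x, g x * h (y - x) = (∫ x, g x) * ∫ x, h x := by
  have h1 := hg.integrable_convolution (ContinuousLinearMap.mul ℝ ℝ) hh
  have h2 := integral_convolution (ContinuousLinearMap.mul ℝ ℝ) hg hh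
  exact ⟨h1, h2⟩

/-- Squared Frobenius norm. -/
def fs {d : ℕ} (A : Matrix (Fin d) (Fin d) ℝ) : ℝ := ∑ i, ∑ j, (A i j) ^ 2

theorem fs_nonneg {d : ℕ} (A : Matrix (Fin d) (Fin d) ℝ) : 0 ≤ fs A :=
  Finset.sum_nonneg fun _ _ => Finset.sum_nonneg fun _ _ => sq_nonneg _

theorem fs_transpose {d : ℕ} (A : Matrix (Fin d) (Fin d) ℝ) : fs Aᵀ = fs A := by
  unfold fs
  rw [Finset.sum_comm]; rfl

theorem fs_mul {d : ℕ} (A B : Matrix (Fin d) (Fin d) ℝ) : fs (A * B) ≤ fs A * fs B := by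
  have h : ∀ i j, ((A * B) i j) ^ 2 ≤ (∑ k, A i k ^ 2) * ∑ k, B k j ^ 2 := fun i j => by
    rw [Matrix.mul_apply]
    exact Finset.sum_mul_sq_le_sq_mul_sq _ _ _
  calc fs (A * B) ≤ ∑ i, ∑ j, (∑ k, A i k ^ 2) * ∑ k, B k j ^ 2 :=
        Finset.sum_le_sum fun i _ => Finset.sum_le_sum fun j _ => h i j
    _ = fs A * fs B := by
        unfold fs
        rw [Finset.sum_comm (f := fun i j => B i j ^ 2), Finset.sum_mul_sum]

theorem fs_add {d : ℕ} (A B : Matrix (Fin d) (Fin d) ℝ) : fs (A + B) ≤ 2 * fs A + 2 * fs B := by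
  unfold fs
  simp only [Finset.mul_sum, ← Finset.sum_add_distrib]
  refine Finset.sum_le_sum fun i _ => Finset.sum_le_sum fun j _ => ?_
  rw [Matrix.add_apply]
  nlinarith [sq_nonneg (A i j - B i j)]

theorem fs_add3 {d : ℕ} (A B C : Matrix (Fin d) (Fin d) ℝ) :
    fs (A + B + C) ≤ 3 * fs A + 3 * fs B + 3 * fs C := by
  unfold fs
  simp only [Finset.mul_sum, ← Finset.sum_add_distrib]
  refine Finset.sum_le_sum fun i _ => Finset.sum_le_sum fun j _ => ?_
  simp only [Matrix.add_apply]
  nlinarith [sq_nonneg (A i j - B i j), sq_nonneg (A i j - C i j), sq_nonneg (B i j - C i j)]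

theorem fs_smul {d : ℕ} (c : ℝ) (A : Matrix (Fin d) (Fin d) ℝ) : fs (c • A) = c ^ 2 * fs A := by
  unfold fs
  simp only [Finset.mul_sum]
  refine Finset.sum_congr rfl fun i _ => Finset.sum_congr rfl fun j _ => ?_
  simp [mul_pow]

theorem fs_sym {d : ℕ} (A P : Matrix (Fin d) (Fin d) ℝ) :
    fs (Aᵀ * P + Pᵀ * A) ≤ 4 * fs A * fs P := by
  have h1 := fs_add (Aᵀ * P) (Pᵀ * A)
  have h2 := fs_mul Aᵀ P
  have h3 := fs_mul Pᵀ A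
  rw [fs_transpose] at h2 h3
  nlinarith

theorem fs_le_of_frob {d : ℕ} {A : Matrix (Fin d) (Fin d) ℝ} {K : ℝ} (h : frobNorm A ≤ K) :
    fs A ≤ K ^ 2 := by
  have h0 : 0 ≤ frobNorm A := Real.sqrt_nonneg _
  have h1 : frobNorm A ^ 2 = fs A := Real.sq_sqrt (fs_nonneg A)
  rw [← h1]
  exact pow_le_pow_left₀ h0 h 2

theorem entry_le_frob {d : ℕ} (A : Matrix (Fin d) (Fin d) ℝ) (i j : Fin d) :
    |A i j| ≤ frobNorm A := by
  apply Real.abs_le_sqrt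
  calc A i j ^ 2 ≤ ∑ j, A i j ^ 2 :=
        Finset.single_le_sum (f := fun j => A i j ^ 2) (fun _ _ => sq_nonneg _) (Finset.mem_univ j)
    _ ≤ _ := Finset.single_le_sum (f := fun i => ∑ j, A i j ^ 2)
        (fun _ _ => Finset.sum_nonneg fun _ _ => sq_nonneg _) (Finset.mem_univ i)

/-- Uniform bound for inverses. -/
theorem inv_bound {d : ℕ} (K : ℝ) (hK : 1 < K) : ∃ M : ℝ, 1 ≤ M ∧
    ∀ A : Matrix (Fin d) (Fin d) ℝ, frobNorm A ≤ K → 1 / K ≤ A.det →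
      ∀ R : Matrix (Fin d) (Fin d) ℝ, fs R ≤ M * fs (Aᵀ * R) := by
  have hcpt : IsCompact {A : Fin d → Fin d → ℝ | ∀ i, A i ∈ {r : Fin d → ℝ | ∀ j, r j ∈ Icc (-K) K}} :=
    isCompact_pi_infinite fun _ => isCompact_pi_infinite fun _ => isCompact_Icc
  have hcont : Continuous (fun A : Matrix (Fin d) (Fin d) ℝ => fs A.adjugate) := by
    unfold fs
    have : Continuous (fun A : Matrix (Fin d) (Fin d) ℝ => A.adjugate) :=
      continuous_id.matrix_adjugate
    exact continuous_finsetSum _ fun i _ => continuous_finsetSum _ fun j _ =>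
      (this.matrix_elem i j).pow 2
  obtain ⟨M0, hM0⟩ := hcpt.bddAbove_image (f := fun A => fs (Matrix.adjugate (Matrix.of A)))
    hcont.continuousOn
  refine ⟨max 1 (K ^ 2 * M0), le_max_left _ _, ?_⟩
  intro A hA hdet R
  have hadj : fs A.adjugate ≤ M0 := by
    apply hM0
    refine ⟨A, ?_, rfl⟩
    intro i j
    have := (entry_le_frob A i j).trans hA
    exact abs_le.1 this
  have hKpos : 0 < K := by linarith
  have hdpos : 0 < A.det := lt_of_lt_of_le (by positivity) hdet
  have h1 : A.adjugateᵀ * (Aᵀ * R) = A.det • R := by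
    rw [← Matrix.mul_assoc, ← Matrix.transpose_mul, Matrix.mul_adjugate]
    simp
  have h2 := fs_mul A.adjugateᵀ (Aᵀ * R)
  rw [h1, fs_smul, fs_transpose] at h2
  have h3 : 1 ≤ K * A.det := by
    have := mul_le_mul_of_nonneg_left hdet hKpos.le
    rwa [mul_one_div_cancel hKpos.ne'] at this
  have h4 : 1 ≤ K ^ 2 * A.det ^ 2 := by
    rw [← mul_pow]; exact one_le_pow₀ h3
  calc fs R = 1 * fs R := by ring
    _ ≤ (K ^ 2 * A.det ^ 2) * fs R := mul_le_mul_of_nonneg_right h4 (fs_nonneg R)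
    _ = K ^ 2 * (A.det ^ 2 * fs R) := by ring
    _ ≤ K ^ 2 * (fs A.adjugate * fs (Aᵀ * R)) := by gcongr
    _ ≤ K ^ 2 * (M0 * fs (Aᵀ * R)) := by
        gcongr
        exact fs_nonneg _
    _ = (K ^ 2 * M0) * fs (Aᵀ * R) := by ring
    _ ≤ _ := mul_le_mul_of_nonneg_right (le_max_right _ _) (fs_nonneg _)

/-- Pointwise algebra. -/
theorem ptwise {d : ℕ} (A F P q : Matrix (Fin d) (Fin d) ℝ) (η : ℝ) :
    fs (Aᵀ * (η • P + q) + (η • P + q)ᵀ * A)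
      ≤ 3 * (η ^ 2 * fs (Fᵀ * P + Pᵀ * F)) + 12 * fs (A - F) * (η ^ 2 * fs P)
        + 12 * fs A * fs q := by
  have e : Aᵀ * (η • P + q) + (η • P + q)ᵀ * A
      = η • (Fᵀ * P + Pᵀ * F) + η • ((A - F)ᵀ * P + Pᵀ * (A - F)) + (Aᵀ * q + qᵀ * A) := by
    simp only [Matrix.transpose_add, Matrix.transpose_sub, Matrix.transpose_smul, Matrix.mul_add,
      Matrix.add_mul, Matrix.sub_mul, Matrix.mul_sub, Matrix.mul_smul, Matrix.smul_mul,
      smul_add, smul_sub]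
    abel
  rw [e]
  refine (fs_add3 _ _ _).trans ?_
  rw [fs_smul, fs_smul]
  have h1 := fs_sym (A - F) P
  have h2 := fs_sym A q
  have h3 := mul_le_mul_of_nonneg_left h1 (sq_nonneg η)
  nlinarith

/-- Matrix of partial derivatives. -/
noncomputable def jac {d : ℕ} (V : Fin d → ES d → ℝ) (x : ES d) : Matrix (Fin d) (Fin d) ℝ :=
  Matrix.of fun i j => pd j (V i) x

theorem int3 {d : ℕ} {f g₁ g₂ g₃ : ES d → ℝ} {a b c : ℝ} (hf : Integrable f) (h1 : Integrable g₁)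
    (h2 : Integrable g₂) (h3 : Integrable g₃)
    (h : ∀ x, f x ≤ a * g₁ x + b * g₂ x + c * g₃ x) :
    ∫ x, f x ≤ a * (∫ x, g₁ x) + b * (∫ x, g₂ x) + c * ∫ x, g₃ x := by
  have e : ∫ x, (a * g₁ x + b * g₂ x + c * g₃ x)
      = a * (∫ x, g₁ x) + b * (∫ x, g₂ x) + c * ∫ x, g₃ x := by
    have h12 : Integrable (fun x => a * g₁ x + b * g₂ x) := (h1.const_mul a).add (h2.const_mul b)
    rw [integral_add h12 (h3.const_mul c), integral_add (h1.const_mul a) (h2.const_mul b),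
      integral_const_mul, integral_const_mul, integral_const_mul]
  rw [← e]
  exact integral_mono hf (((h1.const_mul a).add (h2.const_mul b)).add (h3.const_mul c)) h

theorem local_ineq {d : ℕ} (i0 : Fin d) (τ : ℝ) {V : Fin d → ES d → ℝ} (hV : ∀ i, TF (V i))
    {θ : ES d → ℝ} (hθ : TF θ) (A : Matrix (Fin d) (Fin d) ℝ)
    (F : ES d → Matrix (Fin d) (Fin d) ℝ) {M K2 ε : ℝ} (hM : 0 ≤ M)
    (hAM : ∀ R, fs R ≤ M * fs (Aᵀ * R)) (hAK : fs A ≤ K2)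
    (hclose : ∀ x, θ x ≠ 0 → jac V x ≠ 0 → fs (A - F x) ≤ ε)
    (hS : Continuous fun x => fs ((F x)ᵀ * jac V x + (jac V x)ᵀ * F x)) :
    ∫ x, wt i0 τ x ^ 2 * fs (jac V x) * θ x ^ 2
      ≤ 3 * M * (∫ x, wt i0 τ x ^ 2 * fs ((F x)ᵀ * jac V x + (jac V x)ᵀ * F x) * θ x ^ 2)
        + 12 * M * ε * (∫ x, wt i0 τ x ^ 2 * fs (jac V x) * θ x ^ 2)
        + (12 * M * K2 + 2) *
          ∫ x, wt i0 τ x ^ 2 * (∑ i, V i x ^ 2) * ∑ j, pd j θ x ^ 2 := by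
  set q : ES d → Matrix (Fin d) (Fin d) ℝ := fun x => Matrix.of fun i j => V i x * pd j θ x with hq
  set R : ES d → Matrix (Fin d) (Fin d) ℝ := fun x => θ x • jac V x + q x with hR
  set u : Fin d → ES d → ℝ := fun i x => ∑ k, A k i * (θ x * V k x) with hu
  have huT : ∀ i, TF (u i) := fun i => TF.sum _ fun k => (hθ.mul (hV k)).cmul _
  have hpu : ∀ i j x, pd j (u i) x = (Aᵀ * R x) i j := by
    intro i j x
    rw [hu]
    simp only []
    rw [pd_sum _ (fun k => ((hθ.mul (hV k)).cmul _).diff), Matrix.mul_apply]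
    refine Finset.sum_congr rfl fun k _ => ?_
    rw [pd_cmul (hθ.mul (hV k)).diff, pd_mul hθ.diff (hV k).diff]
    simp [hR, hq, jac]
  have hfq : ∀ x, fs (q x) = (∑ i, V i x ^ 2) * ∑ j, pd j θ x ^ 2 := by
    intro x
    rw [Finset.sum_mul_sum]
    simp [fs, hq, mul_pow]
  have hcar := carleman i0 τ huT
  have e1 : ∀ x, ∑ i, ∑ j, pd j (u i) x ^ 2 = fs (Aᵀ * R x) := by
    intro x; simp only [hpu]; rfl
  have e2 : ∀ x, ∑ i, ∑ j, (pd j (u i) x + pd i (u j) x) ^ 2 = fs (Aᵀ * R x + (R x)ᵀ * A) := by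
    intro x
    simp only [hpu, fs, Matrix.add_apply]
    refine Finset.sum_congr rfl fun i _ => Finset.sum_congr rfl fun j _ => ?_
    congr 2
    rw [← Matrix.transpose_apply (Aᵀ * R x) i j, Matrix.transpose_mul, Matrix.transpose_transpose]
  have hW2 : ContDiff ℝ (⊤ : ℕ∞) (fun x => wt i0 τ x ^ 2) := (wt_contDiff (d := d) i0 τ).pow 2
  have I1 : Integrable fun x => wt i0 τ x ^ 2 * fs (Aᵀ * R x) := by
    simp_rw [← e1]
    exact ((TF.sum _ fun i => TF.sum _ fun j => ((huT i).pd j).sq).mul_left hW2).int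
  have I2 : Integrable fun x => wt i0 τ x ^ 2 * fs (Aᵀ * R x + (R x)ᵀ * A) := by
    simp_rw [← e2]
    exact ((TF.sum _ fun i => TF.sum _ fun j =>
      (((huT i).pd j).add ((huT j).pd i)).sq).mul_left hW2).int
  have I3 : Integrable fun x => wt i0 τ x ^ 2 * fs (jac V x) * θ x ^ 2 := by
    have h : ContDiff ℝ (⊤ : ℕ∞) fun x => fs (jac V x) :=
      (TF.sum _ fun i => TF.sum _ fun j => ((hV i).pd j).sq).1
    exact (hθ.sq.mul_left (hW2.mul h)).int
  have I4 : Integrable fun x => wt i0 τ x ^ 2 * fs (q x) := by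
    simp_rw [hfq]
    exact (((TF.sum _ fun i => (hV i).sq).mul (TF.sum _ fun j => (hθ.pd j).sq)).mul_left hW2).int
  have I5 : Integrable fun x =>
      wt i0 τ x ^ 2 * fs ((F x)ᵀ * jac V x + (jac V x)ᵀ * F x) * θ x ^ 2 := by
    apply Continuous.integrable_of_hasCompactSupport
    · exact (hW2.continuous.mul hS).mul hθ.sq.cont
    · exact hθ.sq.2.mul_left
  simp only [e1, e2] at hcar
  have s1 : ∫ x, wt i0 τ x ^ 2 * fs (jac V x) * θ x ^ 2
      ≤ 2 * M * (∫ x, wt i0 τ x ^ 2 * fs (Aᵀ * R x)) + 2 * ∫ x, wt i0 τ x ^ 2 * fs (q x) := by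
    rw [← integral_const_mul, ← integral_const_mul, ← integral_add (I1.const_mul _) (I4.const_mul _)]
    refine integral_mono I3 ((I1.const_mul _).add (I4.const_mul _)) fun x => ?_
    have h1 : θ x ^ 2 * fs (jac V x) ≤ 2 * fs (R x) + 2 * fs (q x) := by
      rw [← fs_smul]
      have h := fs_add (R x) ((-1 : ℝ) • q x)
      rw [fs_smul] at h
      have e : θ x • jac V x = R x + (-1 : ℝ) • q x := by simp [hR]
      rw [e]; linarith
    have h2 := hAM (R x)
    have h3 : θ x ^ 2 * fs (jac V x) ≤ 2 * M * fs (Aᵀ * R x) + 2 * fs (q x) := by linarith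
    have h4 := mul_le_mul_of_nonneg_left h3 (sq_nonneg (wt i0 τ x))
    simp only
    linarith
  have s2 : ∫ x, wt i0 τ x ^ 2 * fs (Aᵀ * R x + (R x)ᵀ * A)
      ≤ 3 * (∫ x, wt i0 τ x ^ 2 * fs ((F x)ᵀ * jac V x + (jac V x)ᵀ * F x) * θ x ^ 2)
        + 12 * ε * (∫ x, wt i0 τ x ^ 2 * fs (jac V x) * θ x ^ 2)
        + 12 * K2 * ∫ x, wt i0 τ x ^ 2 * fs (q x) := by
    refine int3 I2 I5 I3 I4 fun x => ?_
    have h1 := ptwise A (F x) (jac V x) (q x) (θ x)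
    have h2 : fs (A - F x) * (θ x ^ 2 * fs (jac V x)) ≤ ε * (θ x ^ 2 * fs (jac V x)) := by
      by_cases h : θ x = 0
      · simp [h]
      by_cases h' : jac V x = 0
      · simp [h', fs]
      exact mul_le_mul_of_nonneg_right (hclose x h h') (mul_nonneg (sq_nonneg _) (fs_nonneg _))
    have h3 : fs A * fs (q x) ≤ K2 * fs (q x) := mul_le_mul_of_nonneg_right hAK (fs_nonneg _)
    have h4 : fs (Aᵀ * R x + (R x)ᵀ * A)
        ≤ 3 * (θ x ^ 2 * fs ((F x)ᵀ * jac V x + (jac V x)ᵀ * F x))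
          + 12 * ε * (θ x ^ 2 * fs (jac V x)) + 12 * K2 * fs (q x) := by linarith
    have h5 := mul_le_mul_of_nonneg_left h4 (sq_nonneg (wt i0 τ x))
    linarith
  have s3 : ∀ x, wt i0 τ x ^ 2 * (∑ i, V i x ^ 2) * ∑ j, pd j θ x ^ 2
      = wt i0 τ x ^ 2 * fs (q x) := fun x => by rw [hfq]; ring
  simp_rw [s3]
  have s4 := mul_le_mul_of_nonneg_left (hcar.trans s2) hM
  linarith

theorem pd_refl {d : ℕ} {η : ES d → ℝ} (hη : TF η) (y : ES d) :
    TF (fun x => η (y - x)) ∧ ∀ j x, pd j (fun x => η (y - x)) x = - pd j η (y - x) := by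
  refine ⟨⟨hη.1.comp (contDiff_const.sub contDiff_id), ?_⟩, ?_⟩
  · exact hη.2.comp_homeomorph (Homeomorph.subLeft y)
  · intro j x
    have h1 : HasFDerivAt (fun x : ES d => y - x) (-ContinuousLinearMap.id ℝ (ES d)) x :=
      (hasFDerivAt_id x).const_sub y
    have h2 := (hη.diff (y - x)).hasFDerivAt.comp x h1
    have h3 : fderiv ℝ (fun x => η (y - x)) x = _ := h2.fderiv
    unfold pd
    rw [h3]
    simp

theorem global_ineq {d : ℕ} (i0 : Fin d) (τ : ℝ) {V : Fin d → ES d → ℝ} (hV : ∀ i, TF (V i))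
    {η : ES d → ℝ} (hη : TF η) (F : ES d → Matrix (Fin d) (Fin d) ℝ) {M K2 ε : ℝ} (hM : 0 ≤ M)
    (hK2 : 0 ≤ K2)
    (hA : ∀ y, (∀ x, η (y - x) = 0 ∨ jac V x = 0) ∨ ∃ A : Matrix (Fin d) (Fin d) ℝ,
      (∀ R, fs R ≤ M * fs (Aᵀ * R)) ∧ fs A ≤ K2 ∧
      ∀ x, η (y - x) ≠ 0 → jac V x ≠ 0 → fs (A - F x) ≤ ε)
    (hS : Continuous fun x => fs ((F x)ᵀ * jac V x + (jac V x)ᵀ * F x))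
    (hSc : HasCompactSupport fun x => fs ((F x)ᵀ * jac V x + (jac V x)ᵀ * F x)) :
    (∫ x, wt i0 τ x ^ 2 * fs (jac V x)) * (∫ x, η x ^ 2)
      ≤ 3 * M * ((∫ x, wt i0 τ x ^ 2 * fs ((F x)ᵀ * jac V x + (jac V x)ᵀ * F x)) * ∫ x, η x ^ 2)
        + 12 * M * ε * ((∫ x, wt i0 τ x ^ 2 * fs (jac V x)) * ∫ x, η x ^ 2)
        + (12 * M * K2 + 2) *
          ((∫ x, wt i0 τ x ^ 2 * (∑ i, V i x ^ 2)) * ∫ x, ∑ j, pd j η x ^ 2) := by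
  have hW2 : ContDiff ℝ (⊤ : ℕ∞) (fun x => wt i0 τ x ^ 2) := (wt_contDiff (d := d) i0 τ).pow 2
  have I3 : Integrable fun x => wt i0 τ x ^ 2 * fs (jac V x) :=
    ((TF.sum _ fun i => TF.sum _ fun j => ((hV i).pd j).sq).mul_left hW2).int
  have I4 : Integrable fun x => wt i0 τ x ^ 2 * (∑ i, V i x ^ 2) :=
    ((TF.sum _ fun i => (hV i).sq).mul_left hW2).int
  have I5 : Integrable fun x =>
      wt i0 τ x ^ 2 * fs ((F x)ᵀ * jac V x + (jac V x)ᵀ * F x) :=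
    (hW2.continuous.mul hS).integrable_of_hasCompactSupport hSc.mul_left
  have J1 := hη.sq.int
  have J2 := (TF.sum Finset.univ fun j => (hη.pd j).sq).int
  obtain ⟨a1, b1⟩ := conv_int I3 J1
  obtain ⟨a2, b2⟩ := conv_int I5 J1
  obtain ⟨a3, b3⟩ := conv_int I4 J2
  rw [← b1, ← b2, ← b3]
  refine int3 a1 a2 a1 a3 fun y => ?_
  rcases hA y with h | ⟨A, hAM, hAK, hcl⟩
  · have z : ∀ x, wt i0 τ x ^ 2 * fs (jac V x) * η (y - x) ^ 2 = 0 := by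
      intro x
      rcases h x with h | h
      · simp [h]
      · simp [h, fs]
    simp_rw [z]
    have n1 : 0 ≤ ∫ x, wt i0 τ x ^ 2 * fs ((F x)ᵀ * jac V x + (jac V x)ᵀ * F x) * η (y - x) ^ 2 :=
      integral_nonneg fun x => mul_nonneg (mul_nonneg (sq_nonneg _) (fs_nonneg _)) (sq_nonneg _)
    have n2 : 0 ≤ ∫ x, wt i0 τ x ^ 2 * (∑ i, V i x ^ 2) * ∑ j, pd j η (y - x) ^ 2 :=
      integral_nonneg fun x => mul_nonneg (mul_nonneg (sq_nonneg _)
        (Finset.sum_nonneg fun _ _ => sq_nonneg _)) (Finset.sum_nonneg fun _ _ => sq_nonneg _)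
    simp only [integral_zero, mul_zero, add_zero]
    positivity
  · obtain ⟨hθ, hpθ⟩ := pd_refl hη y
    have := local_ineq i0 τ hV hθ A F hM hAM hAK hcl hS
    simpa only [hpθ, neg_sq] using this

theorem holder_cont {d : ℕ} {Ω : Set (ES d)} {lam K : ℝ} (hlam : 0 < lam)
    {F : ES d → Matrix (Fin d) (Fin d) ℝ}
    (hF : ∀ x ∈ closure Ω, ∀ y ∈ closure Ω, frobNorm (F x - F y) ≤ K * ‖x - y‖ ^ lam)
    (i j : Fin d) : ContinuousOn (fun x => F x i j) Ω := by
  intro x hx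
  show Filter.Tendsto _ _ _
  rw [tendsto_iff_norm_sub_tendsto_zero]
  have hc : Continuous (fun y : ES d => K * ‖y - x‖ ^ lam) :=
    continuous_const.mul (((continuous_id.sub continuous_const).norm).rpow_const
      fun _ => Or.inr hlam.le)
  have ht : Filter.Tendsto (fun y : ES d => K * ‖y - x‖ ^ lam) (nhdsWithin x Ω) (nhds 0) := by
    have := (hc.tendsto x).mono_left (nhdsWithin_le_nhds (s := Ω))
    simpa [Real.zero_rpow hlam.ne'] using this
  refine squeeze_zero' (Filter.Eventually.of_forall fun _ => norm_nonneg _) ?_ ht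
  filter_upwards [self_mem_nhdsWithin] with y hy
  rw [Real.norm_eq_abs]
  exact (entry_le_frob (F y - F x) i j).trans (hF y (subset_closure hy) x (subset_closure hx))

theorem final_ineq {d : ℕ} (i0 : Fin d)
    (Ω : Set (ES d)) (hΩo : IsOpen Ω) (hΩb : Bornology.IsBounded Ω)
    (lam K : ℝ) (hlam : 0 < lam) (hK : 1 < K) :
    ∃ C > (0 : ℝ), ∀ F : ES d → Matrix (Fin d) (Fin d) ℝ,
      (∀ x ∈ closure Ω, frobNorm (F x) ≤ K) →
      (∀ x ∈ closure Ω, ∀ y ∈ closure Ω, frobNorm (F x - F y) ≤ K * ‖x - y‖ ^ lam) →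
      (∀ x ∈ closure Ω, 1 / K ≤ (F x).det) →
      ∀ V : Fin d → ES d → ℝ, (∀ i, TF (V i)) → (∀ i, tsupport (V i) ⊆ Ω) →
        C * ((∫ x, ∑ i, V i x ^ 2) + ∫ x, fs (jac V x))
          ≤ ∫ x, fs ((F x)ᵀ * jac V x + (jac V x)ᵀ * F x) := by
  obtain ⟨M, hM1, hM⟩ := inv_bound (d := d) K hK
  obtain ⟨ρ, hρpos, hρ⟩ := hΩb.exists_pos_norm_le
  have hK0 : 0 < K := by linarith
  have hM0 : 0 < M := by linarith
  set δ : ℝ := 1 / (7 * K * M) with hδ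
  have hδ0 : 0 < δ := by positivity
  set r : ℝ := δ ^ (1 / lam) / 2 with hr
  have hr0 : 0 < r := by positivity
  have hrδ : (2 * r) ^ lam = δ := by
    have : 2 * r = δ ^ (1 / lam) := by rw [hr]; ring
    rw [this, ← Real.rpow_mul hδ0.le, one_div_mul_cancel hlam.ne', Real.rpow_one]
  have hε : 12 * M * (K * δ) ^ 2 ≤ 1 / 4 := by
    have e : 12 * M * (K * δ) ^ 2 = 12 / (49 * M) := by
      rw [hδ]; field_simp; norm_num
    rw [e, div_le_iff₀ (by positivity)]
    linarith
  let bump : ContDiffBump (0 : ES d) := ⟨r / 2, r, by positivity, by linarith⟩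
  set η : ES d → ℝ := fun x => bump x with hηdef
  have hη : TF η := ⟨bump.contDiff, bump.hasCompactSupport⟩
  have hηs : ∀ x, η x ≠ 0 → ‖x‖ < r := by
    intro x hx
    have : x ∈ Function.support bump := hx
    rw [bump.support_eq] at this
    simpa using this
  set m0 : ℝ := ∫ x, η x ^ 2 with hm0
  set m1 : ℝ := ∫ x, ∑ j, pd j η x ^ 2 with hm1
  have hm0pos : 0 < m0 := by
    refine hη.sq.cont.integral_pos_of_hasCompactSupport_nonneg_nonzero hη.sq.2
      (fun x => sq_nonneg _) (x := 0) ?_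
    have : bump 0 = 1 := bump.one_of_mem_closedBall (by
      simp only [Metric.mem_closedBall, dist_self]; exact bump.rIn_pos.le)
    simp [hηdef, this]
  have hm1nn : 0 ≤ m1 := integral_nonneg fun x => Finset.sum_nonneg fun _ _ => sq_nonneg _
  set B : ℝ := 12 * M * K ^ 2 + 2 with hB
  have hB0 : 0 < B := by positivity
  set τ : ℝ := 1 + 4 * B * m1 / m0 with hτ
  have hτ1 : 1 ≤ τ := by
    have : 0 ≤ 4 * B * m1 / m0 := by positivity
    linarith
  have hτ2 : 1 ≤ τ ^ 2 := one_le_pow₀ hτ1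
  have hτ3 : 4 * B * m1 ≤ τ ^ 2 * m0 := by
    have h1 : 4 * B * m1 / m0 ≤ τ := by linarith
    rw [div_le_iff₀ hm0pos] at h1
    have h2 : τ ≤ τ ^ 2 := by rw [pow_two]; exact le_mul_of_one_le_left (by linarith) hτ1
    exact h1.trans (mul_le_mul_of_nonneg_right h2 hm0pos.le)
  set a : ℝ := Real.exp (τ * ρ) ^ 2 with ha
  have ha0 : 0 < a := by positivity
  have hwle : ∀ x ∈ Ω, wt i0 τ x ^ 2 ≤ a ∧ 1 ≤ a * wt i0 τ x ^ 2 := by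
    intro x hx
    have h1 : |x i0| ≤ ρ := by
      have := PiLp.norm_apply_le x i0
      rw [Real.norm_eq_abs] at this
      exact this.trans (hρ x hx)
    obtain ⟨h2, h3⟩ := abs_le.1 h1
    constructor
    · apply pow_le_pow_left₀ (Real.exp_pos _).le
      exact Real.exp_le_exp.2 (by nlinarith)
    · rw [ha, ← mul_pow]
      apply one_le_pow₀
      rw [wt, ← Real.exp_add]
      exact Real.one_le_exp (by nlinarith)
  refine ⟨1 / (12 * M * a ^ 2), by positivity, ?_⟩
  intro F hFK hFh hFd V hV hVs
  have hjac0 : ∀ x, x ∉ ⋃ i, tsupport (V i) → jac V x = 0 := by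
    intro x hx
    ext i j
    have h1 : x ∉ tsupport (V i) := fun h => hx (mem_iUnion.2 ⟨i, h⟩)
    have h2 : fderiv ℝ (V i) x = 0 := by
      by_contra h
      exact h1 (support_fderiv_subset ℝ h)
    simp [jac, pd, h2]
  have hTΩ : (⋃ i, tsupport (V i)) ⊆ Ω := iUnion_subset hVs
  have hTc : IsCompact (⋃ i, tsupport (V i)) := isCompact_iUnion fun i => (hV i).2
  have hjacΩ : ∀ x, jac V x ≠ 0 → x ∈ Ω := fun x h => by
    by_contra hx
    exact h (hjac0 x fun h' => hx (hTΩ h'))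
  set S : ES d → ℝ := fun x => fs ((F x)ᵀ * jac V x + (jac V x)ᵀ * F x) with hSdef
  have hS0 : ∀ x, x ∉ ⋃ i, tsupport (V i) → S x = 0 := by
    intro x hx
    simp [hSdef, hjac0 x hx, fs]
  have hSc : HasCompactSupport S := HasCompactSupport.intro hTc hS0
  have hSts : tsupport S ⊆ Ω := by
    refine (closure_minimal ?_ hTc.isClosed).trans hTΩ
    intro x hx
    by_contra h
    exact hx (hS0 x h)
  have hScont : Continuous S := by
    refine ContinuousOn.continuous_of_tsupport_subset ?_ hΩo hSts
    have hFc := holder_cont hlam hFh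
    have hJ : ∀ i j, ContinuousOn (fun x => jac V x i j) Ω := fun i j =>
      ((hV i).pd j).cont.continuousOn
    simp only [hSdef, fs, Matrix.add_apply, Matrix.mul_apply, Matrix.transpose_apply]
    refine continuousOn_finsetSum _ fun i _ => continuousOn_finsetSum _ fun j _ => ?_
    refine ContinuousOn.pow (ContinuousOn.add ?_ ?_) 2
    · exact continuousOn_finsetSum _ fun k _ => (hFc k i).mul (hJ k j)
    · exact continuousOn_finsetSum _ fun k _ => (hJ k i).mul (hFc k j)
  have hg := global_ineq i0 τ hV hη F (M := M) (K2 := K ^ 2) (ε := (K * δ) ^ 2) hM0.le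
    (sq_nonneg K) (by
      intro y
      by_cases h : ∃ z, η (y - z) ≠ 0 ∧ jac V z ≠ 0
      · right
        obtain ⟨z, hz1, hz2⟩ := h
        have hzΩ := subset_closure (hjacΩ z hz2)
        refine ⟨F z, hM _ (hFK z hzΩ) (hFd z hzΩ), fs_le_of_frob (hFK z hzΩ), ?_⟩
        intro x hx1 hx2
        have hxΩ := subset_closure (hjacΩ x hx2)
        apply fs_le_of_frob
        refine (hFh z hzΩ x hxΩ).trans ?_
        have h1 := hηs _ hz1
        have h2 := hηs _ hx1
        have h3 : ‖z - x‖ ≤ 2 * r := by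
          have e : z - x = (y - x) - (y - z) := by abel
          rw [e]
          exact (norm_sub_le _ _).trans (by linarith)
        rw [← hrδ]
        gcongr
      · left
        intro x
        by_contra hx
        rw [not_or] at hx
        exact h ⟨x, hx⟩) hScont hSc
  have hW2 : ContDiff ℝ (⊤ : ℕ∞) (fun x => wt i0 τ x ^ 2) := (wt_contDiff (d := d) i0 τ).pow 2
  have TP : TF fun x => fs (jac V x) := TF.sum _ fun i => TF.sum _ fun j => ((hV i).pd j).sq
  have TV : TF fun x => ∑ i, V i x ^ 2 := TF.sum _ fun i => (hV i).sq
  have I5 : Integrable fun x => wt i0 τ x ^ 2 * S x :=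
    (hW2.continuous.mul hScont).integrable_of_hasCompactSupport hSc.mul_left
  set X : ℝ := ∫ x, wt i0 τ x ^ 2 * fs (jac V x) with hX
  set Y : ℝ := ∫ x, wt i0 τ x ^ 2 * (∑ i, V i x ^ 2) with hY
  set Z : ℝ := ∫ x, wt i0 τ x ^ 2 * S x with hZ
  have hY0 : 0 ≤ Y := integral_nonneg fun x => mul_nonneg (sq_nonneg _)
    (Finset.sum_nonneg fun _ _ => sq_nonneg _)
  have hX0 : 0 ≤ X := integral_nonneg fun x => mul_nonneg (sq_nonneg _) (fs_nonneg _)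
  have hpoin : τ ^ 2 * Y ≤ X := by
    have e1 : Y = ∑ i, ∫ x, wt i0 τ x ^ 2 * V i x ^ 2 := by
      rw [hY]
      simp only [Finset.mul_sum]
      exact integral_finsetSum _ fun i _ => ((hV i).sq.mul_left hW2).int
    rw [e1, Finset.mul_sum]
    calc _ ≤ ∑ i, ∫ x, wt i0 τ x ^ 2 * pd i0 (V i) x ^ 2 :=
          Finset.sum_le_sum fun i _ => wpoincare i0 τ (hV i)
      _ = ∫ x, ∑ i, wt i0 τ x ^ 2 * pd i0 (V i) x ^ 2 :=
          (integral_finsetSum _ fun i _ => (((hV i).pd i0).sq.mul_left hW2).int).symm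
      _ ≤ X := by
          refine integral_mono (TF.sum _ fun i => ((hV i).pd i0).sq.mul_left hW2).int
            (TP.mul_left hW2).int fun x => ?_
          simp only
          rw [← Finset.mul_sum]
          refine mul_le_mul_of_nonneg_left ?_ (sq_nonneg _)
          exact Finset.sum_le_sum fun i _ =>
            Finset.single_le_sum (f := fun j => jac V x i j ^ 2)
              (fun _ _ => sq_nonneg _) (Finset.mem_univ i0)
  -- absorb
  have k1 : 12 * M * (K * δ) ^ 2 * (X * m0) ≤ 1 / 4 * (X * m0) :=
    mul_le_mul_of_nonneg_right hε (by positivity)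
  have k2 : B * (Y * m1) ≤ 1 / 4 * (X * m0) := by
    have h1 := mul_le_mul_of_nonneg_right hτ3 hY0
    have h2 := mul_le_mul_of_nonneg_right hpoin hm0pos.le
    linarith
  have k3 : X ≤ 6 * M * Z := by
    have : X * m0 ≤ 6 * M * Z * m0 := by linarith
    exact le_of_mul_le_mul_right this hm0pos
  have k4 : Y ≤ X := by nlinarith
  have l1 : ∫ x, ∑ i, V i x ^ 2 ≤ a * Y := by
    rw [hY, ← integral_const_mul]
    refine integral_mono TV.int ((TV.mul_left hW2).cmul a).int fun x => ?_
    simp only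
    by_cases hx : x ∈ Ω
    · have := mul_le_mul_of_nonneg_right (hwle x hx).2
        (Finset.sum_nonneg fun i _ => sq_nonneg (V i x) : (0:ℝ) ≤ ∑ i, V i x ^ 2)
      linarith
    · have : ∀ i, V i x = 0 := fun i => by
        by_contra h
        exact hx (hVs i (subset_tsupport _ h))
      simp [this]
  have l2 : ∫ x, fs (jac V x) ≤ a * X := by
    rw [hX, ← integral_const_mul]
    refine integral_mono TP.int ((TP.mul_left hW2).cmul a).int fun x => ?_
    simp only
    by_cases hx : jac V x = 0
    · simp [hx, fs]
    · have := mul_le_mul_of_nonneg_right (hwle x (hjacΩ x hx)).2 (fs_nonneg (jac V x))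
      linarith
  have l3 : Z ≤ a * ∫ x, S x := by
    rw [hZ, ← integral_const_mul]
    refine integral_mono I5 ((hScont.integrable_of_hasCompactSupport hSc).const_mul a) fun x => ?_
    simp only
    by_cases hx : jac V x = 0
    · simp [hSdef, hx, fs]
    · exact mul_le_mul_of_nonneg_right (hwle x (hjacΩ x hx)).1 (fs_nonneg _)
  rw [div_mul_eq_mul_div, one_mul, div_le_iff₀ (by positivity)]
  calc _ ≤ a * Y + a * X := add_le_add l1 l2
    _ ≤ a * X + a * X := by gcongr
    _ = 2 * a * X := by ring
    _ ≤ 2 * a * (6 * M * Z) := by gcongr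
    _ ≤ 2 * a * (6 * M * (a * ∫ x, S x)) := by gcongr
    _ = _ := by ring

/-- Generalized Korn inequality of Pompe and Neff (Proposition 3.4 of the
paper), stated for smooth compactly supported test fields: for every
`λ ∈ (0,1)` and `K > 1` there is `C(K) > 0`, uniform over all `λ`-Hölder
matrix fields `F` bounded by `K` with `det F ≥ 1/K` on `cl(Ω)`, such that
`∫_Ω |Fᵀ∇v + (∇v)ᵀF|² ≥ C(K)(∫_Ω |v|² + ∫_Ω |∇v|²)`. -/
theorem korn_pompe_neff {d : ℕ}
    (Ω : Set (EuclideanSpace ℝ (Fin d))) (hΩo : IsOpen Ω)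
    (hΩb : Bornology.IsBounded Ω) (hΩc : IsConnected Ω)
    (lam K : ℝ) (hlam : lam ∈ Set.Ioo (0 : ℝ) 1) (hK : 1 < K) :
    ∃ C > (0 : ℝ), ∀ F : EuclideanSpace ℝ (Fin d) → Matrix (Fin d) (Fin d) ℝ,
      (∀ x ∈ closure Ω, frobNorm (F x) ≤ K) →
      (∀ x ∈ closure Ω, ∀ y ∈ closure Ω, frobNorm (F x - F y) ≤ K * ‖x - y‖ ^ lam) →
      (∀ x ∈ closure Ω, 1 / K ≤ (F x).det) →
      ∀ v : EuclideanSpace ℝ (Fin d) → EuclideanSpace ℝ (Fin d),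
        ContDiff ℝ (⊤ : ℕ∞) v → HasCompactSupport v → tsupport v ⊆ Ω →
        C * ((∫ x in Ω, ‖v x‖ ^ 2) +
            ∫ x in Ω, ∑ i, ∑ j, ((jacobianMatrix v x) i j) ^ 2)
          ≤ ∫ x in Ω, ∑ i, ∑ j,
              (((F x)ᵀ * jacobianMatrix v x + (jacobianMatrix v x)ᵀ * F x) i j) ^ 2 := by
  rcases Nat.eq_zero_or_pos d with hd | hd
  · subst hd
    refine ⟨1, one_pos, ?_⟩
    intro F _ _ _ v _ _ _
    have : ∀ x, v x = 0 := fun x => Subsingleton.elim _ _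
    simp [this]
  obtain ⟨C, hC, h⟩ := final_ineq ⟨0, hd⟩ Ω hΩo hΩb lam K hlam.1 hK
  refine ⟨C, hC, ?_⟩
  intro F h1 h2 h3 v hv hvc hvs
  have hsub : ∀ i, tsupport (fun x => v x i) ⊆ tsupport v := by
    intro i
    refine closure_mono fun x hx => ?_
    intro h0
    exact hx (by simp [h0])
  have hVT : ∀ i, TF (fun x => v x i) := fun i =>
    ⟨(EuclideanSpace.proj (𝕜 := ℝ) i).contDiff.comp hv,
      hvc.of_isClosed_subset (isClosed_tsupport _) (hsub i)⟩
  have hmain := h F h1 h2 h3 (fun i x => v x i) hVT (fun i => (hsub i).trans hvs)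
  have hj : ∀ x, jac (fun i x => v x i) x = jacobianMatrix v x := by
    intro x
    ext i j
    have hd : HasFDerivAt v (fderiv ℝ v x) x := (hv.differentiable (by simp) x).hasFDerivAt
    have h2 := ((EuclideanSpace.proj (𝕜 := ℝ) i).hasFDerivAt (x := v x)).comp x hd
    have h3 : fderiv ℝ (fun x => v x i) x = _ := h2.fderiv
    simp only [jac, jacobianMatrix, pd, Matrix.of_apply]
    rw [h3]
    simp
  simp only [hj] at hmain
  have hv0 : ∀ x, x ∉ Ω → v x = 0 := fun x hx => by
    by_contra h0
    exact hx (hvs (subset_tsupport _ h0))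
  have hj0 : ∀ x, x ∉ Ω → jacobianMatrix v x = 0 := fun x hx => by
    have h2 : fderiv ℝ v x = 0 := by
      by_contra h0
      exact hx (hvs (support_fderiv_subset ℝ h0))
    ext i j
    simp [jacobianMatrix, h2]
  rw [setIntegral_eq_integral_of_forall_compl_eq_zero (fun x hx => by simp [hv0 x hx]),
    setIntegral_eq_integral_of_forall_compl_eq_zero (fun x hx => by simp [hj0 x hx]),
    setIntegral_eq_integral_of_forall_compl_eq_zero (fun x hx => by simp [hj0 x hx])]
  have hn : ∀ x, ‖v x‖ ^ 2 = ∑ i, v x i ^ 2 := fun x => EuclideanSpace.real_norm_sq_eq _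
  simp_rw [hn]
  exact hmain
end
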